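/- arXiv:1907.12243 — 2 statements merged into one kernel-verified Lean document; each statement's English description precedes it below -/
import Mathlib

section
/- If the discrete Sobolev inner product ⟨·,·⟩ is sequentially-ordered and μ belongs to the Nevai class M(0,1), then S_n(z)/P_n(z) converges, uniformly on every compact subset of ℂ̄ ∖ [−1,1], to ∏_{j=1}^{N} (φ(z) − φ(c_j))² / (2 φ(z) (z − c_j)) as n → ∞, where P_n are the monic orthogonal polynomials with respect to μ and φ(z) = z + √(z²−1) with √(z²−1) > 0 for z > 1. -/
open MeasureTheory Polynomial Filter
open scoped Classical

noncomputable section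

/-- The discrete Sobolev inner product with a single derivative order `d j` at each
mass point `c j`, with weight `η j`. -/
def sobInner (μ : Measure ℝ) {N : ℕ} (c : Fin N → ℝ) (d : Fin N → ℕ) (η : Fin N → ℝ)
    (f g : Polynomial ℝ) : ℝ :=
  (∫ x in Set.Icc (-1:ℝ) 1, f.eval x * g.eval x ∂μ) +
    ∑ j, η j * ((derivative^[d j] f).eval (c j)) * ((derivative^[d j] g).eval (c j))

/-- The general discrete Sobolev inner product with weights `η j i` for the `i`-th
derivatives, `0 ≤ i ≤ d j`, at each mass point `c j`. -/
def sobInner2 (μ : Measure ℝ) {N : ℕ} (c : Fin N → ℝ) (d : Fin N → ℕ) (η : Fin N → ℕ → ℝ)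
    (f g : Polynomial ℝ) : ℝ :=
  (∫ x in Set.Icc (-1:ℝ) 1, f.eval x * g.eval x ∂μ) +
    ∑ j, ∑ i ∈ Finset.range (d j + 1),
      η j i * ((derivative^[i] f).eval (c j)) * ((derivative^[i] g).eval (c j))

/-- Sequential order for the data of a discrete Sobolev inner product:
`d` is nondecreasing and each `c k` lies outside the convex hull of
`(-1,1) ∪ {c 1, …, c (k-1)}`. -/
def SeqOrdered {N : ℕ} (c : Fin N → ℝ) (d : Fin N → ℕ) : Prop :=
  (∀ i j : Fin N, i ≤ j → d i ≤ d j) ∧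
    ∀ k : Fin N, c k ∉ convexHull ℝ (Set.Ioo (-1:ℝ) 1 ∪ c '' {j : Fin N | j < k})

/-- The polynomial ρ(x) = ∏_{c j < -1} (x - c j)^(d j + 1) · ∏_{c j > 1} (c j - x)^(d j + 1). -/
def rhoPoly {N : ℕ} (c : Fin N → ℝ) (d : Fin N → ℕ) : Polynomial ℝ :=
  (∏ j ∈ Finset.univ.filter (fun j => c j < -1), (X - C (c j)) ^ (d j + 1)) *
    ∏ j ∈ Finset.univ.filter (fun j => (1:ℝ) < c j), (C (c j) - X) ^ (d j + 1)

/-- ν = number of mass points greater than 1. -/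
def nuCount {N : ℕ} (c : Fin N → ℝ) : ℕ :=
  (Finset.univ.filter (fun j : Fin N => (1:ℝ) < c j)).card

/-- μ belongs to the Nevai class M(0,1): supp μ = [-1,1] and the monic orthogonal
polynomials of μ satisfy a three-term recurrence with aₙ → 1/2 and bₙ → 0. -/
def NevaiClass (μ : Measure ℝ) : Prop :=
  μ (Set.Icc (-1:ℝ) 1)ᶜ = 0 ∧
  (∀ x ∈ Set.Icc (-1:ℝ) 1, ∀ ε > 0, 0 < μ (Metric.ball x ε)) ∧
  ∃ (P : ℕ → Polynomial ℝ) (a b : ℕ → ℝ),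
    (∀ n, (P n).Monic) ∧ (∀ n, (P n).natDegree = n) ∧
    (∀ n, ∀ m < n, (∫ x in Set.Icc (-1:ℝ) 1, x ^ m * (P n).eval x ∂μ) = 0) ∧
    P 0 = 1 ∧ P 1 = X - C (b 0) ∧
    (∀ n, P (n + 2) = (X - C (b (n + 1))) * P (n + 1) - C ((a (n + 1)) ^ 2) * P n) ∧
    Tendsto a atTop (nhds (1 / 2)) ∧ Tendsto b atTop (nhds 0)

/-- The segment [-1,1] regarded as a subset of ℂ. -/
def segIcc : Set ℂ := Complex.ofReal '' Set.Icc (-1:ℝ) 1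

/-- Markov-type function: z ↦ ∫ q(x) / (z - x) w(x) dμ(x). -/
def markovHat (μ : Measure ℝ) (w q : Polynomial ℝ) (z : ℂ) : ℂ :=
  ∫ x in Set.Icc (-1:ℝ) 1, ((q.eval x * w.eval x : ℝ) : ℂ) / (z - (x : ℂ)) ∂μ

/-- Associated function: z ↦ ∫ (p(z) - p(x)) / (z - x) · q(x) w(x) dμ(x). -/
def assocFun (μ : Measure ℝ) (w q p : Polynomial ℝ) (z : ℂ) : ℂ :=
  ∫ x in Set.Icc (-1:ℝ) 1,
    ((aeval z p - ((p.eval x : ℝ) : ℂ)) / (z - (x : ℂ))) * ((q.eval x * w.eval x : ℝ) : ℂ) ∂μ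

/-- A function changes sign at `t` if arbitrarily close to `t`, on the left and right,
it takes values of opposite signs. -/
def SignChangeAt (p : Polynomial ℝ) (t : ℝ) : Prop :=
  ∀ δ > 0, ∃ x ∈ Set.Ioo (t - δ) t, ∃ y ∈ Set.Ioo t (t + δ), p.eval x * p.eval y < 0

/-- N₀(f; A): number of zeros of `f` in `A`, counted with multiplicity. -/
def N0 (f : Polynomial ℝ) (A : Set ℝ) : ℕ :=
  (f.roots.filter (fun x => x ∈ A)).card

lemma unif_contr_zero {α : Type*} {K : Set α} {e : ℕ → α → ℝ} {r : ℝ} (hr0 : 0 ≤ r) (hr : r < 1)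
    (hb : ∀ n, ∃ C, ∀ z ∈ K, e n z ≤ C)
    (h : ∀ ε > 0, ∀ᶠ n in atTop, ∀ z ∈ K, e (n+1) z ≤ r * e n z + ε) :
    ∀ ε > 0, ∀ᶠ n in atTop, ∀ z ∈ K, e n z < ε := by
  intro ε hε
  obtain ⟨n0, hn0⟩ := eventually_atTop.1 (h ((1-r)*(ε/2)) (by nlinarith))
  obtain ⟨C, hC⟩ := hb n0
  have key : ∀ k, ∀ z ∈ K, e (n0+k) z ≤ r^k * (max C 0) + ε/2 := by
    intro k
    induction k with
    | zero =>
      intro z hz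
      have := hC z hz
      have h2 := le_max_left C 0
      simp; linarith
    | succ k ih =>
      intro z hz
      have h1 := hn0 (n0+k) (by omega) z hz
      have h2 := mul_le_mul_of_nonneg_left (ih z hz) hr0
      rw [← add_assoc]
      have : r^(k+1) = r * r^k := by ring
      rw [this]
      nlinarith
  have hl : Tendsto (fun k => r^k * (max C 0)) atTop (nhds 0) := by
    simpa using (tendsto_pow_atTop_nhds_zero_of_lt_one hr0 hr).mul_const (max C 0)
  obtain ⟨k0, hk0⟩ := eventually_atTop.1 (hl.eventually (gt_mem_nhds (half_pos hε)))
  filter_upwards [eventually_ge_atTop (n0 + k0)] with n hn z hz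
  obtain ⟨k, rfl⟩ := Nat.exists_eq_add_of_le (show n0 ≤ n by omega)
  have := key k z hz
  have := hk0 k (by omega)
  linarith

lemma unif_W {α : Type*} {K : Set α} {q u : ℕ → α → ℂ} {Q : α → ℂ} {r : ℝ} (hr : r < 1)
    (hQ : ∀ z ∈ K, ‖Q z‖ ≤ r)
    (hu0 : ∀ z ∈ K, u 0 z = 0)
    (hu : ∀ n, ∀ z ∈ K, u (n+1) z = q n z * (1 + u n z))
    (hb : ∀ n, ∃ C, ∀ z ∈ K, ‖q n z‖ ≤ C)
    (hq : TendstoUniformlyOn q Q atTop K) :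
    TendstoUniformlyOn u (fun z => Q z / (1 - Q z)) atTop K := by
  rcases K.eq_empty_or_nonempty with rfl | ⟨z0, hz0⟩
  · exact tendstoUniformlyOn_empty
  have hr0 : 0 ≤ r := (norm_nonneg _).trans (hQ z0 hz0)
  have hden : ∀ z ∈ K, 1 - r ≤ ‖1 - Q z‖ := by
    intro z hz
    have := norm_sub_norm_le (1:ℂ) (Q z)
    have h2 := hQ z hz
    simp at this; linarith
  have hne : ∀ z ∈ K, 1 - Q z ≠ 0 := fun z hz => by
    have := hden z hz
    exact norm_pos_iff.1 (by linarith)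
  have hub : ∀ n, ∃ C, 0 ≤ C ∧ ∀ z ∈ K, ‖u n z‖ ≤ C := by
    intro n
    induction n with
    | zero => exact ⟨0, le_rfl, fun z hz => by simp [hu0 z hz]⟩
    | succ n ih =>
      obtain ⟨C, hC0, hC⟩ := ih
      obtain ⟨D, hD⟩ := hb n
      refine ⟨|D| * (1 + C), by positivity, fun z hz => ?_⟩
      rw [hu n z hz, norm_mul]
      refine mul_le_mul ((hD z hz).trans (le_abs_self D)) ?_ (norm_nonneg _) (abs_nonneg _)
      refine (norm_add_le _ _).trans ?_
      simpa using hC z hz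
  have := unif_contr_zero (K := K) (e := fun n z => ‖u n z - Q z / (1 - Q z)‖) (r := (1+r)/2)
    (by linarith) (by linarith) ?_ ?_
  · rw [Metric.tendstoUniformlyOn_iff]
    intro ε hε
    filter_upwards [this ε hε] with n hn z hz
    rw [dist_comm, dist_eq_norm]
    exact hn z hz
  · intro n
    obtain ⟨C, hC0, hC⟩ := hub n
    refine ⟨C + r / (1-r), fun z hz => (norm_sub_le _ _).trans (add_le_add (hC z hz) ?_)⟩
    rw [norm_div]
    exact div_le_div₀ hr0 (hQ z hz) (by linarith) (hden z hz)
  · intro ε hε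
    rw [Metric.tendstoUniformlyOn_iff] at hq
    have h1r : 0 < 1 - r := by linarith
    filter_upwards [hq (ε * (1-r)) (by positivity), hq ((1-r)/2) (by linarith)] with n h1 h2 z hz
    have h1 := h1 z hz
    have h2 := h2 z hz
    rw [dist_comm, dist_eq_norm] at h1 h2
    have hid : u (n+1) z - Q z / (1 - Q z) =
      q n z * (u n z - Q z / (1 - Q z)) + (q n z - Q z) / (1 - Q z) := by
      rw [hu n z hz]
      field_simp [hne z hz]
      ring
    rw [hid]
    refine (norm_add_le _ _).trans (add_le_add ?_ ?_)
    · rw [norm_mul]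
      refine mul_le_mul_of_nonneg_right ?_ (norm_nonneg _)
      have := norm_le_norm_add_norm_sub' (q n z) (Q z)
      have := hQ z hz
      linarith
    · rw [norm_div, div_le_iff₀ (by linarith [hden z hz])]
      have := mul_le_mul_of_nonneg_left (hden z hz) hε.le
      linarith

lemma mobius_conv {a b : ℕ → ℝ} {f : ℕ → ℂ} {z w : ℂ}
    (ha : Tendsto a atTop (nhds (1/2))) (hb : Tendsto b atTop (nhds 0))
    (hw : 1 < ‖w‖) (hzw : w ^ 2 - 2 * z * w + 1 = 0)
    (hf : ∀ n, f (n+1) * (z - b (n+1) - (a (n+1))^2 * f n) = 1)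
    {m M : ℝ} (hm : 0 < m) (hfm : ∀ n, m ≤ ‖f n - 2 * w‖) (hfM : ∀ n, ‖f n‖ ≤ M) :
    Tendsto f atTop (nhds (2 / w)) := by
  have hw0 : w ≠ 0 := norm_pos_iff.1 (by linarith)
  have hM : 0 ≤ M := (norm_nonneg _).trans (hfM 0)
  set k : ℕ → ℂ := fun n => f n - 2 * w with hk
  have hk0 : ∀ n, k n ≠ 0 := fun n => norm_pos_iff.1 (by have := hfm n; simp only [hk]; linarith)
  set t : ℕ → ℂ := fun n => (f n - 2 / w) / k n with ht
  have hft : ∀ n, f n - 2 / w = t n * k n := fun n => by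
    simp only [ht]; rw [div_mul_cancel₀ _ (hk0 n)]
  have h2w : ‖2 / w‖ ≤ 2 := by
    rw [norm_div]; simp
    rw [div_le_iff₀ (by linarith)]; linarith
  set T : ℝ := (M + 2) / m with hT
  have hT0 : 0 ≤ T := by positivity
  have htT : ∀ n, ‖t n‖ ≤ T := fun n => by
    simp only [ht, hT]; rw [norm_div]
    exact div_le_div₀ (by linarith) ((norm_sub_le _ _).trans (add_le_add (hfM n) h2w)) hm (hfm n)
  set A : ℕ → ℂ := fun n => ((a (n+1) : ℝ) : ℂ)^2 with hA
  have ha' : Tendsto (fun n => a (n+1)) atTop (nhds (1/2)) := (tendsto_add_atTop_iff_nat 1).2 ha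
  have hb' : Tendsto (fun n => b (n+1)) atTop (nhds 0) := (tendsto_add_atTop_iff_nat 1).2 hb
  have haC : Tendsto A atTop (nhds (1/4)) := by
    have := ((Complex.continuous_ofReal.tendsto _).comp ha').pow 2
    have h4 : (((1/2 : ℝ) : ℂ))^2 = 1/4 := by push_cast; norm_num
    rw [h4] at this
    exact this
  have hbC : Tendsto (fun n => ((b (n+1) : ℝ) : ℂ)) atTop (nhds 0) := by
    have := ((Complex.continuous_ofReal.tendsto _).comp hb')
    rw [Complex.ofReal_zero] at this
    exact this
  set ε1 : ℕ → ℂ := fun n => b (n+1) + (A n - 1/4) * (2 / w) with hε1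
  set ε2 : ℕ → ℂ := fun n => b (n+1) + (A n - 1/4) * (2 * w) with hε2
  have hε1l : Tendsto ε1 atTop (nhds 0) := by
    have := hbC.add ((haC.sub_const (1/4)).mul_const (2/w)); rw [sub_self, zero_mul, add_zero] at this; exact this
  have hε2l : Tendsto ε2 atTop (nhds 0) := by
    have := hbC.add ((haC.sub_const (1/4)).mul_const (2*w)); rw [sub_self, zero_mul, add_zero] at this; exact this
  have hz : z = (w + w⁻¹) / 2 := by field_simp; linear_combination -hzw
  have hrec : ∀ n, t (n+1) * (A n * k n + ε2 n) = (w⁻¹)^2 * (A n * (t n * k n) + ε1 n) := by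
    intro n
    have hfn := hf n
    have hf0 : f (n+1) ≠ 0 := left_ne_zero_of_mul_eq_one hfn
    have e1 : f (n+1) - 2/w = f (n+1) * (2/w) * (A n * (t n * k n) + ε1 n) := by
      rw [← hft n]
      simp only [hε1, hA]
      have : f (n+1) - 2/w = f (n+1) - 2/w * (f (n+1) * (z - b (n+1) - (a (n+1))^2 * f n)) := by
        rw [hfn]; ring
      rw [this, hz]; field_simp; ring
    have e2 : k (n+1) = f (n+1) * (2*w) * (A n * k n + ε2 n) := by
      simp only [hε2, hA, hk]
      have : f (n+1) - 2*w = f (n+1) - 2*w * (f (n+1) * (z - b (n+1) - (a (n+1))^2 * f n)) := by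
        rw [hfn]; ring
      rw [this, hz]; field_simp; ring
    have e3 := hft (n+1)
    rw [e1, e2] at e3
    have : f (n+1) * (2 * w) ≠ 0 := by simp [hf0, hw0]
    apply mul_left_cancel₀ this
    rw [show f (n+1) * (2*w) * (t (n+1) * (A n * k n + ε2 n)) = t (n+1) * (f (n+1) * (2*w) * (A n * k n + ε2 n)) by ring, ← e3]
    field_simp
  have hr1 : ‖(w⁻¹)^2‖ < 1 := by
    rw [norm_pow, norm_inv]
    have : ‖w‖⁻¹ < 1 := inv_lt_one_of_one_lt₀ hw
    exact pow_lt_one₀ (by positivity) this (by norm_num)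
  have := unif_contr_zero (K := (Set.univ : Set Unit)) (e := fun n _ => ‖t n‖) (norm_nonneg _) hr1
    (fun n => ⟨T, fun _ _ => htT n⟩) ?_
  · have htl : Tendsto t atTop (nhds 0) := by
      rw [Metric.tendsto_atTop]
      intro ε hε
      obtain ⟨n, hn⟩ := eventually_atTop.1 (this ε hε)
      exact ⟨n, fun k hk => by simpa using hn k hk () trivial⟩
    have : Tendsto (fun n => t n * k n) atTop (nhds 0) := by
      refine squeeze_zero_norm (a := fun n => ‖t n‖ * (M + ‖2*w‖)) (fun n => ?_) ?_
      · rw [norm_mul]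
        exact mul_le_mul_of_nonneg_left ((norm_sub_le _ _).trans (by linarith [hfM n])) (norm_nonneg _)
      · simpa using htl.norm.mul_const (M + ‖2*w‖)
    have h2 := this.add_const (2/w)
    simp only [zero_add] at h2
    refine h2.congr (fun n => ?_)
    rw [← hft n]; ring
  · intro ε hε
    have hl : Tendsto (fun n => ‖ε1 n‖ + ‖ε2 n‖ * T) atTop (nhds 0) := by
      simpa using hε1l.norm.add (hε2l.norm.mul_const T)
    have hA8 : ∀ᶠ n in atTop, 1/8 < ‖A n‖ := haC.norm.eventually (lt_mem_nhds (by norm_num))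
    filter_upwards [hl.eventually (gt_mem_nhds (show 0 < ε * (1/8*m) by positivity)), hA8] with n h1 h2 _ _
    have hAk : 1/8*m ≤ ‖A n * k n‖ := by
      rw [norm_mul]; exact mul_le_mul h2.le (hfm n) hm.le (norm_nonneg _)
    have hAk0 : A n * k n ≠ 0 := norm_pos_iff.1 (lt_of_lt_of_le (by positivity) hAk)
    have hid : t (n+1) = (w⁻¹)^2 * t n + ((w⁻¹)^2 * ε1 n - ε2 n * t (n+1)) / (A n * k n) := by
      have := hrec n
      rw [← sub_eq_iff_eq_add', eq_div_iff hAk0]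
      linear_combination this
    rw [hid]
    refine (norm_add_le _ _).trans (add_le_add (by rw [norm_mul]) ?_)
    rw [norm_div, div_le_iff₀ (lt_of_lt_of_le (by positivity) hAk)]
    have h3 : ‖(w⁻¹)^2 * ε1 n - ε2 n * t (n+1)‖ ≤ ‖ε1 n‖ + ‖ε2 n‖ * T := by
      refine (norm_sub_le _ _).trans (add_le_add ?_ ?_)
      · rw [norm_mul]; exact mul_le_of_le_one_left (norm_nonneg _) hr1.le
      · rw [norm_mul]; exact mul_le_mul_of_nonneg_left (htT _) (norm_nonneg _)
    have := mul_le_mul_of_nonneg_left hAk hε.le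
    linarith

lemma im_bound {a b : ℕ → ℝ} {p : ℕ → ℂ} {z : ℂ} (hz : z.im ≠ 0) (h0 : p 0 = 1) (h1 : p 1 = z - b 0)
    (hrec : ∀ n, p (n+2) = (z - b (n+1)) * p (n+1) - (a (n+1))^2 * p n) :
    ∀ n, p n ≠ 0 ∧ p (n+1) ≠ 0 ∧ z.im^2 ≤ z.im * (p (n+1) / p n).im := by
  intro n
  induction n with
  | zero =>
    refine ⟨by simp [h0], ?_, ?_⟩
    · intro h
      rw [zero_add, h1] at h
      have := congrArg Complex.im h
      simp at this; exact hz this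
    · simp [h0, h1]; nlinarith
  | succ n ih =>
    obtain ⟨i1, i2, i3⟩ := ih
    have hg : p (n+2) / p (n+1) = z - b (n+1) - (a (n+1))^2 * (p (n+1)/p n)⁻¹ := by
      rw [hrec]; field_simp
    have him : z.im^2 ≤ z.im * (p (n+2) / p (n+1)).im := by
      rw [hg]
      have : ((((a (n+1):ℝ):ℂ))^2 * (p (n+1)/p n)⁻¹).im = - (a (n+1))^2 * ((p (n+1)/p n).im / Complex.normSq (p (n+1)/p n)) := by
        rw [← Complex.ofReal_pow, Complex.im_ofReal_mul, Complex.inv_im]; ring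
      rw [Complex.sub_im, this]
      simp only [Complex.sub_im, Complex.ofReal_im]
      have h5 : 0 ≤ (a (n+1))^2 * (z.im * (p (n+1)/p n).im) / Complex.normSq (p (n+1)/p n) := by
        apply div_nonneg _ (Complex.normSq_nonneg _)
        have : 0 ≤ z.im * (p (n+1)/p n).im := le_trans (by positivity) i3
        positivity
      have h6 : z.im * (z.im - 0 - - (a (n+1))^2 * ((p (n+1)/p n).im / Complex.normSq (p (n+1)/p n)))
        = z.im^2 + (a (n+1))^2 * (z.im * (p (n+1)/p n).im) / Complex.normSq (p (n+1)/p n) := by ring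
      rw [h6]; linarith
    refine ⟨i2, ?_, him⟩
    intro h
    rw [h] at him
    simp at him
    have : 0 < z.im^2 := by positivity
    linarith [sq_nonneg z.im, him, pow_eq_zero_iff (two_ne_zero) |>.not.2 hz, this, show z.im^2 ≤ 0 by simp [him]]

lemma re_bound {a b : ℕ → ℝ} {p : ℕ → ℂ} {z : ℂ} {g : ℕ → ℝ} (hz : 1 < z.re) (h0 : p 0 = 1) (h1 : p 1 = z - b 0)
    (hrec : ∀ n, p (n+2) = (z - b (n+1)) * p (n+1) - (a (n+1))^2 * p n)
    (hgpos : ∀ n, 0 < g n) (g0 : g 0 = 1) (g1 : g 1 = 1 - b 0)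
    (hgrec : ∀ n, g (n+2) = (1 - b (n+1)) * g (n+1) - (a (n+1))^2 * g n) :
    ∀ n, p n ≠ 0 ∧ p (n+1) ≠ 0 ∧ z.re - 1 + g (n+1) / g n ≤ ‖p (n+1) / p n‖ := by
  have key : ∀ n, p n ≠ 0 → z.re - 1 + g (n+1) / g n ≤ ‖p (n+1) / p n‖ → p (n+1) ≠ 0 := by
    intro n hn h hh
    rw [hh] at h
    simp at h
    have : 0 < g (n+1) / g n := div_pos (hgpos _) (hgpos _)
    linarith
  have hre : ∀ x : ℝ, z.re - x ≤ ‖z - x‖ := fun x => by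
    have := Complex.re_le_norm (z - x); simpa using this
  intro n
  induction n with
  | zero =>
    have : z.re - 1 + g (0+1) / g 0 ≤ ‖p (0+1) / p 0‖ := by
      simp [h0, h1, g0, g1]; linarith [hre (b 0)]
    exact ⟨by simp [h0], key 0 (by simp [h0]) this, this⟩
  | succ n ih =>
    obtain ⟨i1, i2, i3⟩ := ih
    have hg : p (n+2) / p (n+1) = z - b (n+1) - (a (n+1))^2 * (p (n+1)/p n)⁻¹ := by
      rw [hrec]; field_simp
    have hG : g (n+2) / g (n+1) = 1 - b (n+1) - (a (n+1))^2 * (g (n+1)/g n)⁻¹ := by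
      rw [hgrec]; have := (hgpos n).ne'; have := (hgpos (n+1)).ne'; field_simp
    have : z.re - 1 + g (n+2) / g (n+1) ≤ ‖p (n+2) / p (n+1)‖ := by
      rw [hg, hG]
      have h5 := norm_sub_norm_le (z - b (n+1)) ((a (n+1))^2 * (p (n+1)/p n)⁻¹)
      have h6 : ‖(((a (n+1) : ℝ):ℂ))^2 * (p (n+1)/p n)⁻¹‖ ≤ (a (n+1))^2 * (g (n+1)/g n)⁻¹ := by
        rw [norm_mul, norm_pow, Complex.norm_real, Real.norm_eq_abs, sq_abs, norm_inv]
        refine mul_le_mul_of_nonneg_left ?_ (sq_nonneg _)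
        apply inv_anti₀ (div_pos (hgpos _) (hgpos _))
        linarith
      linarith [hre (b (n+1))]
    exact ⟨i2, key (n+1) i2 this, this⟩

lemma poly_integrable (μ : Measure ℝ) [IsFiniteMeasure μ] (p : Polynomial ℝ) :
    IntegrableOn (fun x => p.eval x) (Set.Icc (-1:ℝ) 1) μ :=
  p.continuous.continuousOn.integrableOn_compact isCompact_Icc

/-- The integration functional on polynomials. -/
def Lmu (μ : Measure ℝ) [IsFiniteMeasure μ] : Polynomial ℝ →ₗ[ℝ] ℝ where
  toFun p := ∫ x in Set.Icc (-1:ℝ) 1, p.eval x ∂μ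
  map_add' p q := by
    simp only [eval_add]
    exact integral_add (poly_integrable μ p) (poly_integrable μ q)
  map_smul' r p := by
    simp only [eval_smul, smul_eq_mul, RingHom.id_apply]
    exact integral_const_mul r _

lemma Lmu_apply (μ : Measure ℝ) [IsFiniteMeasure μ] (p : Polynomial ℝ) :
    Lmu μ p = ∫ x in Set.Icc (-1:ℝ) 1, p.eval x ∂μ := rfl

lemma Lmu_mono (μ : Measure ℝ) [IsFiniteMeasure μ] {p q : Polynomial ℝ}
    (h : ∀ x ∈ Set.Icc (-1:ℝ) 1, p.eval x ≤ q.eval x) : Lmu μ p ≤ Lmu μ q :=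
  setIntegral_mono_on (poly_integrable μ p) (poly_integrable μ q) measurableSet_Icc h

lemma L_orth (L : Polynomial ℝ →ₗ[ℝ] ℝ) {p q : Polynomial ℝ} {n : ℕ}
    (h : ∀ m < n, L (X ^ m * p) = 0) (hq : q.degree < n) : L (q * p) = 0 := by
  rcases eq_or_ne q 0 with rfl | hq0
  · simp
  rw [q.as_sum_range' n ((natDegree_lt_iff_degree_lt hq0).2 hq), Finset.sum_mul, map_sum]
  refine Finset.sum_eq_zero fun i hi => ?_
  rw [← C_mul_X_pow_eq_monomial, mul_assoc, ← smul_eq_C_mul, map_smul, h i (Finset.mem_range.1 hi), smul_zero]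

lemma L_noroot (μ : Measure ℝ) [IsFiniteMeasure μ]
    (hpos : ∀ p : Polynomial ℝ, p ≠ 0 → 0 < Lmu μ (p * p))
    {p : Polynomial ℝ} {n : ℕ} (hm : p.Monic) (hd : p.natDegree = n)
    (h : ∀ m < n, Lmu μ (X ^ m * p) = 0) {c : ℝ} (hc : 1 ≤ |c|) : p.eval c ≠ 0 := by
  intro hroot
  obtain ⟨q, hq⟩ := dvd_iff_isRoot.2 hroot
  have hp0 : p ≠ 0 := hm.ne_zero
  have hq0 : q ≠ 0 := by rintro rfl; simp at hq; exact hp0 hq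
  have hqd : q.degree < n := by
    have h1 : p.natDegree = 1 + q.natDegree := by
      rw [hq, natDegree_mul (X_sub_C_ne_zero c) hq0, natDegree_X_sub_C]
    rw [← natDegree_lt_iff_degree_lt hq0]; omega
  have h0 : Lmu μ (q * p) = 0 := L_orth _ h hqd
  have h1 := hpos p hp0
  obtain ⟨s, hs⟩ : ∃ s : ℝ, ∀ x ∈ Set.Icc (-1:ℝ) 1, (x - c)^2 ≤ s * (x - c) := by
    rcases le_abs.1 hc with h | h
    · refine ⟨-(c + 1), fun x hx => ?_⟩
      nlinarith [hx.1, hx.2]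
    · refine ⟨1 - c, fun x hx => ?_⟩
      nlinarith [hx.1, hx.2]
  have h2 : Lmu μ (p * p) ≤ Lmu μ (s • (q * p)) := by
    apply Lmu_mono
    intro x hx
    have := mul_le_mul_of_nonneg_right (hs x hx) (sq_nonneg (q.eval x))
    rw [hq]
    simp only [eval_mul, eval_smul, eval_sub, eval_X, eval_C, smul_eq_mul]
    linarith
  rw [map_smul, h0, smul_zero] at h2
  linarith

lemma monic_eval_pos {p : Polynomial ℝ} (hm : p.Monic) {x0 : ℝ} (h : ∀ x, x0 ≤ x → p.eval x ≠ 0) :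
    0 < p.eval x0 := by
  rcases Nat.eq_zero_or_pos p.natDegree with hd | hd
  · rw [hm.natDegree_eq_zero.1 hd]; simp
  by_contra hn
  have ht : Tendsto (fun x => p.eval x) atTop atTop :=
    tendsto_atTop_of_leadingCoeff_nonneg p (natDegree_pos_iff_degree_pos.1 hd) (by rw [hm.leadingCoeff]; norm_num)
  obtain ⟨y, hy1, hy2⟩ := ((ht.eventually (eventually_ge_atTop 0)).and (eventually_ge_atTop x0)).exists
  obtain ⟨w, hw, hw2⟩ := intermediate_value_Icc hy2 p.continuous.continuousOn (show (0:ℝ) ∈ Set.Icc _ _ from ⟨not_lt.1 hn, hy1⟩)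
  exact h w hw.1 hw2

lemma L_pos_one (μ : Measure ℝ) [IsFiniteMeasure μ]
    (hpos : ∀ p : Polynomial ℝ, p ≠ 0 → 0 < Lmu μ (p * p))
    {p : Polynomial ℝ} {n : ℕ} (hm : p.Monic) (hd : p.natDegree = n)
    (h : ∀ m < n, Lmu μ (X ^ m * p) = 0) : 0 < p.eval 1 ∧ 0 < (-1)^n * p.eval (-1) := by
  constructor
  · exact monic_eval_pos hm fun x hx => L_noroot μ hpos hm hd h (hx.trans (le_abs_self x))
  · have hm2 : (C ((-1:ℝ)^n) * p.comp (-X)).Monic := by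
      have := hm.neg_one_pow_natDegree_mul_comp_neg_X
      rw [hd] at this
      simpa using this
    have := monic_eval_pos hm2 (x0 := 1) (fun x hx => by
      have h3 := L_noroot μ hpos hm hd h (c := -x) (by rw [abs_neg]; exact hx.trans (le_abs_self x))
      simp only [eval_mul, eval_C, eval_comp, eval_neg, eval_X]
      exact mul_ne_zero (by positivity) h3)
    simpa only [eval_mul, eval_C, eval_comp, eval_neg, eval_X] using this

section OP

variable {L : Polynomial ℝ →ₗ[ℝ] ℝ} {P : ℕ → Polynomial ℝ} {a b : ℕ → ℝ}

lemma P_orth (hPdeg : ∀ n, (P n).natDegree = n) (hPm : ∀ n, (P n).Monic)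
    (hPorth : ∀ n, ∀ m < n, L (X ^ m * P n) = 0) {m n : ℕ} (h : m < n) :
    L (P m * P n) = 0 := by
  apply L_orth L (hPorth n)
  rw [← natDegree_lt_iff_degree_lt (hPm m).ne_zero, hPdeg]; exact h

lemma h_succ (hPdeg : ∀ n, (P n).natDegree = n) (hPm : ∀ n, (P n).Monic)
    (hPorth : ∀ n, ∀ m < n, L (X ^ m * P n) = 0)
    (hPrec : ∀ n, P (n + 2) = (X - C (b (n + 1))) * P (n + 1) - C ((a (n + 1)) ^ 2) * P n) (n : ℕ) :
    L (P (n+1) * P (n+1)) = (a (n+1))^2 * L (P n * P n) := by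
  have h1 : L (P n * P (n+2)) = 0 := P_orth hPdeg hPm hPorth (by omega)
  have h2 : L (P n * P (n+1)) = 0 := P_orth hPdeg hPm hPorth (by omega)
  have h3 : L ((X * P n - P (n+1)) * P (n+1)) = 0 := by
    apply L_orth L (hPorth (n+1))
    have hdeg : (X * P n).degree = (P (n+1)).degree := by
      rw [degree_mul, degree_X, degree_eq_natDegree (hPm n).ne_zero, degree_eq_natDegree (hPm (n+1)).ne_zero, hPdeg, hPdeg]
      push_cast; ring
    have := degree_sub_lt_left hdeg (mul_ne_zero X_ne_zero (hPm n).ne_zero) (by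
      rw [(hPm (n+1)).leadingCoeff, (monic_X.mul (hPm n)).leadingCoeff])
    rwa [hdeg, degree_eq_natDegree (hPm (n+1)).ne_zero, hPdeg] at this
  have e1 : P n * P (n+2) = (X * P n - P (n+1)) * P (n+1) + P (n+1) * P (n+1) - b (n+1) • (P n * P (n+1))
      - (a (n+1))^2 • (P n * P n) := by
    rw [hPrec, smul_eq_C_mul, smul_eq_C_mul]; ring
  rw [e1, map_sub, map_sub, map_add, map_smul, map_smul, h2, h3] at h1
  simp at h1
  linarith

lemma S_repr (hpos : ∀ p : Polynomial ℝ, p ≠ 0 → 0 < L (p * p))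
    (hPdeg : ∀ n, (P n).natDegree = n) (hPm : ∀ n, (P n).Monic)
    (hPorth : ∀ n, ∀ m < n, L (X ^ m * P n) = 0)
    {N : ℕ} (c : Fin N → ℝ) (d : Fin N → ℕ) (η : Fin N → ℝ) {n : ℕ} {s : Polynomial ℝ}
    (hs : s.Monic) (hsd : s.natDegree = n)
    (hso : ∀ m < n, L (X^m * s) +
      ∑ j, η j * ((derivative^[d j] (X^m : Polynomial ℝ)).eval (c j)) * ((derivative^[d j] s).eval (c j)) = 0) :
    s = P n - ∑ j, ∑ k ∈ Finset.range n, (η j * ((derivative^[d j] s).eval (c j)) *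
      ((derivative^[d j] (P k)).eval (c j)) / L (P k * P k)) • P k := by
  set y : Fin N → ℝ := fun j => η j * ((derivative^[d j] s).eval (c j)) with hy
  -- evaluation functional
  let E : Fin N → Polynomial ℝ →ₗ[ℝ] ℝ := fun j => (Polynomial.leval (c j)).comp (derivative ^ (d j))
  have hE : ∀ j p, E j p = (derivative^[d j] p).eval (c j) := fun j p => by
    simp [E, Module.End.pow_apply]
  have hso' : ∀ q : Polynomial ℝ, q.degree < n → L (q * s) = - ∑ j, y j * E j q := by
    intro q hq
    let F : Polynomial ℝ →ₗ[ℝ] ℝ := L.comp (LinearMap.mulRight ℝ s) + ∑ j, y j • E j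
    have hF : ∀ p, F p = L (p * s) + ∑ j, y j * E j p := fun p => by simp [F]
    have := L_orth F (p := 1) (q := q) (n := n) (fun m hm => by
      rw [mul_one, hF, ← hso m hm]
      congr 1
      exact Finset.sum_congr rfl fun j _ => by rw [hE, hy]; ring) hq
    rw [mul_one, hF] at this
    linarith
  set R := s - (P n - ∑ j, ∑ k ∈ Finset.range n, (y j *
      ((derivative^[d j] (P k)).eval (c j)) / L (P k * P k)) • P k) with hR
  have hT : ∀ m < n, L (P m * R) = 0 := by
    intro m hm
    have hPm0 : L (P m * P m) ≠ 0 := (hpos _ (hPm m).ne_zero).ne'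
    have hmd : (P m).degree < n := by
      rw [← natDegree_lt_iff_degree_lt (hPm m).ne_zero, hPdeg]; exact hm
    rw [hR, mul_sub, mul_sub, map_sub, map_sub, P_orth hPdeg hPm hPorth hm, hso' _ hmd, Finset.mul_sum, map_sum]
    rw [← Finset.sum_neg_distrib, zero_sub, sub_neg_eq_add, ← Finset.sum_add_distrib]
    refine Finset.sum_eq_zero fun j _ => ?_
    rw [Finset.mul_sum, map_sum, Finset.sum_eq_single m]
    · rw [mul_smul_comm, map_smul, hE, smul_eq_mul, div_mul_cancel₀ _ hPm0]; ring
    · intro k _ hkm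
      rw [mul_smul_comm, map_smul]
      rcases lt_or_gt_of_ne hkm with h | h
      · rw [mul_comm (P m), P_orth hPdeg hPm hPorth h, smul_zero]
      · rw [P_orth hPdeg hPm hPorth h, smul_zero]
    · intro h; exact absurd (Finset.mem_range.2 hm) h
  have hRd : R.degree < n := by
    have h1 : (s - P n).degree < n := by
      have hdeg : s.degree = (P n).degree := by
        rw [degree_eq_natDegree hs.ne_zero, degree_eq_natDegree (hPm n).ne_zero, hsd, hPdeg]
      have := degree_sub_lt_left hdeg hs.ne_zero (by rw [hs.leadingCoeff, (hPm n).leadingCoeff])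
      rwa [degree_eq_natDegree hs.ne_zero, hsd] at this
    have h2 : (∑ j, ∑ k ∈ Finset.range n, (y j *
      ((derivative^[d j] (P k)).eval (c j)) / L (P k * P k)) • P k).degree < n := by
      rw [← mem_degreeLT]
      refine Submodule.sum_mem _ fun j _ => Submodule.sum_mem _ fun k hk => Submodule.smul_mem _ _ ?_
      rw [mem_degreeLT, ← natDegree_lt_iff_degree_lt (hPm k).ne_zero, hPdeg]
      exact Finset.mem_range.1 hk
    rw [hR, sub_sub_eq_add_sub, add_sub_right_comm]
    exact (degree_add_le _ _).trans_lt (max_lt h1 h2)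
  have hX : ∀ m : ℕ, ∀ q : Polynomial ℝ, q.degree < m → m ≤ n → L (q * R) = 0 := by
    intro m
    induction m with
    | zero => intro q hq _; rw [degree_lt_iff_coeff_zero] at hq
              have : q = 0 := by ext i; simpa using hq i (Nat.zero_le i)
              simp [this]
    | succ m ih =>
      intro q hq hmn
      have e : q * R = (q - q.coeff m • P m) * R + q.coeff m • (P m * R) := by
        rw [smul_eq_C_mul, smul_eq_C_mul]; ring
      rw [e, map_add, map_smul, hT m (by omega), smul_zero, add_zero]
      apply ih _ _ (by omega)
      rw [degree_lt_iff_coeff_zero] at hq ⊢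
      intro i hi
      rw [coeff_sub, coeff_smul, smul_eq_mul]
      rcases hi.eq_or_lt with rfl | hi
      · have := hPm m
        rw [Monic, leadingCoeff, hPdeg] at this
        rw [this]; ring
      · rw [hq i (by exact_mod_cast hi), coeff_eq_zero_of_natDegree_lt (p := P m) (by rw [hPdeg]; exact hi)]; ring
  have hR0 : R = 0 := by
    by_contra hne
    exact (hpos R hne).ne' (hX n R hRd le_rfl)
  exact sub_eq_zero.1 (hR ▸ hR0)

end OP

lemma mem_segIcc {z : ℂ} : z ∈ segIcc ↔ z.im = 0 ∧ -1 ≤ z.re ∧ z.re ≤ 1 := by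
  constructor
  · rintro ⟨x, hx, rfl⟩; exact ⟨by simp, by simpa using hx.1, by simpa using hx.2⟩
  · rintro ⟨h1, h2, h3⟩
    exact ⟨z.re, ⟨h2, h3⟩, by apply Complex.ext <;> simp [h1]⟩

/-- gauge of distance to the segment -/
def gaugeD (z : ℂ) : ℝ := max |z.im| (|z.re| - 1)

lemma gaugeD_cont : Continuous gaugeD := by
  unfold gaugeD
  fun_prop

lemma gaugeD_pos {z : ℂ} : 0 < gaugeD z ↔ z ∉ segIcc := by
  rw [mem_segIcc, gaugeD, lt_max_iff, abs_pos, sub_pos, lt_abs]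
  constructor
  · rintro (h | h | h) ⟨h1, h2, h3⟩
    · exact h h1
    · linarith
    · linarith
  · intro h
    by_contra hn
    push Not at hn
    exact h ⟨hn.1, by linarith [hn.2.2], hn.2.1⟩

lemma U_open : IsOpen (segIccᶜ) := by
  have : segIccᶜ = gaugeD ⁻¹' (Set.Ioi 0) := by
    ext z; simp only [Set.mem_compl_iff, Set.mem_preimage, Set.mem_Ioi]; exact gaugeD_pos.symm
  rw [this]
  exact isOpen_Ioi.preimage gaugeD_cont

lemma U_preconnected : IsPreconnected (segIccᶜ) := by
  have hA : IsPreconnected {z : ℂ | 0 < z.im} := (convex_halfSpace_im_gt 0).isPreconnected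
  have hB : IsPreconnected {z : ℂ | z.im < 0} := (convex_halfSpace_im_lt 0).isPreconnected
  have hC : IsPreconnected {z : ℂ | 1 < z.re} := (convex_halfSpace_re_gt 1).isPreconnected
  have hD : IsPreconnected {z : ℂ | z.re < -1} := (convex_halfSpace_re_lt (-1)).isPreconnected
  have h1 := IsPreconnected.union (2 + Complex.I) (by simp) (by simp) hA hC
  have h2 := IsPreconnected.union (2 - Complex.I) (by right; simp) (by simp) h1 hB
  have h3 := IsPreconnected.union (-2 + Complex.I) (by left; left; simp) (by simp) h2 hD
  convert h3 using 1
  ext z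
  rw [Set.mem_compl_iff, ← gaugeD_pos, gaugeD, lt_max_iff, abs_pos, sub_pos, lt_abs]
  simp only [Set.mem_union, Set.mem_ofPred_eq, ne_iff_lt_or_gt]
  constructor
  · rintro ((h | h) | h | h)
    · tauto
    · tauto
    · tauto
    · right; linarith
  · rintro (((h | h) | h) | h)
    · tauto
    · tauto
    · tauto
    · right; right; linarith

section phi
variable {φ : ℂ → ℂ}
lemma phi_quad (hφsq : ∀ z ∉ segIcc, (φ z - z) ^ 2 = z ^ 2 - 1) {z : ℂ} (hz : z ∉ segIcc) :
    φ z ^ 2 - 2 * z * φ z + 1 = 0 := by linear_combination hφsq z hz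

lemma phi_ne (hφsq : ∀ z ∉ segIcc, (φ z - z) ^ 2 = z ^ 2 - 1) {z : ℂ} (hz : z ∉ segIcc) :
    φ z ≠ 0 := by
  intro h
  have := phi_quad hφsq hz
  rw [h] at this; simp at this

lemma phi_z (hφsq : ∀ z ∉ segIcc, (φ z - z) ^ 2 = z ^ 2 - 1) {z : ℂ} (hz : z ∉ segIcc) :
    z = (φ z + (φ z)⁻¹) / 2 := by
  have h0 := phi_ne hφsq hz
  have := phi_quad hφsq hz
  field_simp
  linear_combination -this

lemma phi_norm (hφdiff : DifferentiableOn ℂ φ segIccᶜ)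
    (hφsq : ∀ z ∉ segIcc, (φ z - z) ^ 2 = z ^ 2 - 1)
    (hφpos : ∀ x : ℝ, 1 < x → φ (x : ℂ) = ((x + Real.sqrt (x ^ 2 - 1) : ℝ) : ℂ))
    {z : ℂ} (hz : z ∉ segIcc) : 1 < ‖φ z‖ := by
  by_contra hn
  push Not at hn
  have h2U : ((2:ℝ):ℂ) ∈ segIccᶜ := by
    rw [Set.mem_compl_iff, mem_segIcc]; rintro ⟨_, _, h⟩; simp at h
  have h2 : 1 ≤ ‖φ ((2:ℝ):ℂ)‖ := by
    rw [hφpos 2 (by norm_num), Complex.norm_real, Real.norm_eq_abs]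
    refine le_trans ?_ (le_abs_self _)
    have := Real.sqrt_nonneg ((2:ℝ)^2-1)
    linarith
  obtain ⟨w, hw, hw1⟩ := U_preconnected.intermediate_value (show z ∈ segIccᶜ from hz) h2U hφdiff.continuousOn.norm
    (show (1:ℝ) ∈ Set.Icc _ _ from ⟨hn, h2⟩)
  simp only at hw1
  apply hw
  have hwz := phi_z hφsq hw
  have hinv : (φ w)⁻¹ = (starRingEnd ℂ) (φ w) := by
    rw [Complex.inv_def, Complex.normSq_eq_norm_sq, hw1]; simp
  rw [hinv, Complex.add_conj] at hwz
  have hre := Complex.abs_re_le_norm (φ w)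
  rw [hw1, abs_le] at hre
  refine ⟨(φ w).re, ⟨hre.1, hre.2⟩, ?_⟩
  refine Eq.trans ?_ hwz.symm
  push_cast; ring

lemma phi_im (hφsq : ∀ z ∉ segIcc, (φ z - z) ^ 2 = z ^ 2 - 1) {z : ℂ} (hz : z ∉ segIcc)
    (h1 : 1 < ‖φ z‖) (him : z.im ≠ 0) : 0 < z.im * (φ z).im := by
  have hwz := phi_z hφsq hz
  have h2 : 2 * z.im = (φ z).im * (1 - (Complex.normSq (φ z))⁻¹) := by
    have := congrArg Complex.im hwz
    have h3 : ((φ z + (φ z)⁻¹) / 2).im = ((φ z).im * (1 - (Complex.normSq (φ z))⁻¹))/2 := by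
      rw [show (2:ℂ) = ((2:ℝ):ℂ) by norm_num, Complex.div_ofReal_im, Complex.add_im, Complex.inv_im]; ring
    rw [h3] at this; linarith
  have h4 : 0 < 1 - (Complex.normSq (φ z))⁻¹ := by
    rw [sub_pos]; apply inv_lt_one_of_one_lt₀
    rw [Complex.normSq_eq_norm_sq]; nlinarith
  have h5 : (φ z).im ≠ 0 := by
    intro h; rw [h] at h2; simp at h2; exact him h2
  have : z.im * (φ z).im = (φ z).im^2 * (1 - (Complex.normSq (φ z))⁻¹) / 2 := by
    linear_combination ((φ z).im / 2) * h2
  rw [this]; positivity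
end phi

lemma equi_conv {f : ℕ → ℂ → ℂ} {F : ℂ → ℂ} {U : Set ℂ}
    (hf : ∀ n, DifferentiableOn ℂ (f n) U) (hF : ContinuousOn F U)
    (hb : ∀ z0 ∈ U, ∃ R > 0, ∃ M, Metric.ball z0 R ⊆ U ∧ ∀ n, ∀ z ∈ Metric.ball z0 R, ‖f n z‖ ≤ M)
    (hpt : ∀ z ∈ U, z.im ≠ 0 → Tendsto (fun n => f n z) atTop (nhds (F z))) :
    TendstoLocallyUniformlyOn f F atTop U := by
  rw [Metric.tendstoLocallyUniformlyOn_iff]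
  intro ε hε z0 hz0
  obtain ⟨R, hR, M, hRU, hM⟩ := hb z0 hz0
  have hM0 : 0 ≤ M := (norm_nonneg _).trans (hM 0 z0 (Metric.mem_ball_self hR))
  obtain ⟨δ1, hδ1, hFδ⟩ := Metric.continuousOn_iff.1 hF z0 hz0 (ε/6) (by positivity)
  set Lc := M / (R/3) with hLc
  have hLc0 : 0 ≤ Lc := by positivity
  set δ := min (min δ1 (R/3)) (ε / (6 * (Lc + 1))) with hδ
  have hδpos : 0 < δ := by positivity
  have hδ1' : δ ≤ δ1 := (min_le_left _ _).trans (min_le_left _ _)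
  have hδR : δ ≤ R/3 := (min_le_left _ _).trans (min_le_right _ _)
  have hδL : Lc * δ ≤ ε/6 := by
    have : δ ≤ ε / (6 * (Lc + 1)) := min_le_right _ _
    rw [le_div_iff₀ (by positivity)] at this
    nlinarith
  have hlip : ∀ n, ∀ z ∈ Metric.ball z0 δ, ∀ w ∈ Metric.ball z0 δ, ‖f n w - f n z‖ ≤ Lc * ‖w - z‖ := by
    intro n z hz w hw
    have hUo : ∀ x ∈ Metric.ball z0 R, DifferentiableAt ℂ (f n) x := fun x hx =>
      ((hf n).mono hRU).differentiableAt (Metric.isOpen_ball.mem_nhds hx)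
    refine Convex.norm_image_sub_le_of_norm_deriv_le (s := Metric.ball z0 δ) ?_ ?_ (convex_ball z0 δ) hz hw
    · intro x hx
      exact hUo x (Metric.ball_subset_ball (by linarith) hx)
    · intro x hx
      have hsub : Metric.closedBall x (R/3) ⊆ Metric.ball z0 R := by
        intro y hy
        rw [Metric.mem_ball] at hx ⊢
        rw [Metric.mem_closedBall] at hy
        have := dist_triangle y x z0
        linarith
      apply Complex.norm_deriv_le_of_forall_mem_sphere_norm_le (by positivity)
      · apply DifferentiableOn.diffContOnCl
        rw [closure_ball _ (by positivity)]
        exact fun y hy => (hUo y (hsub hy)).differentiableWithinAt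
      · intro y hy
        exact hM n y (hsub (Metric.sphere_subset_closedBall hy))
  obtain ⟨w, hwδ, hwim⟩ : ∃ w ∈ Metric.ball z0 δ, w.im ≠ 0 := by
    by_cases h : z0.im = 0
    · refine ⟨z0 + ((δ/2 : ℝ):ℂ) * Complex.I, ?_, ?_⟩
      · rw [Metric.mem_ball, dist_eq_norm]; simp
        rw [abs_of_pos hδpos]; linarith
      · simp [h]; exact hδpos.ne'
    · exact ⟨z0, Metric.mem_ball_self hδpos, h⟩
  have hwU : w ∈ U := hRU (Metric.ball_subset_ball (by linarith) hwδ)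
  refine ⟨Metric.ball z0 δ, mem_nhdsWithin_of_mem_nhds (Metric.ball_mem_nhds z0 hδpos), ?_⟩
  filter_upwards [(Metric.tendsto_atTop.1 (hpt w hwU hwim) (ε/6) (by positivity)) |> fun ⟨n, hn⟩ => eventually_atTop.2 ⟨n, hn⟩] with n hn z hz
  have hzU : z ∈ U := hRU (Metric.ball_subset_ball (by linarith) hz)
  have e1 := hFδ z hzU (lt_of_lt_of_le hz hδ1')
  have e2 := hFδ w hwU (lt_of_lt_of_le hwδ hδ1')
  have e3 := hlip n z hz w hwδ
  have e4 : ‖w - z‖ ≤ 2 * δ := by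
    rw [← dist_eq_norm]
    have := dist_triangle_right w z z0
    rw [Metric.mem_ball] at hz hwδ
    linarith
  have e5 : dist (f n w) (f n z) ≤ 2 * (ε/6) := by
    rw [dist_eq_norm]
    have := mul_le_mul_of_nonneg_left e4 hLc0
    linarith
  have t1 := dist_triangle (F z) (F z0) (f n z)
  have t2 := dist_triangle (F z0) (F w) (f n z)
  have t3 := dist_triangle (F w) (f n w) (f n z)
  rw [dist_comm] at hn e2
  linarith

section ratio
variable {P : ℕ → Polynomial ℝ} {a b : ℕ → ℝ}

lemma P_off (hP0 : P 0 = 1) (hP1 : P 1 = X - C (b 0))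
    (hPrec : ∀ n, P (n + 2) = (X - C (b (n + 1))) * P (n + 1) - C ((a (n + 1)) ^ 2) * P n)
    (hpos : ∀ n, 0 < (P n).eval 1 ∧ 0 < (-1)^n * (P n).eval (-1))
    {z : ℂ} (hz : z ∉ segIcc) (n : ℕ) :
    aeval z (P n) ≠ 0 ∧ ‖aeval z (P n) / aeval z (P (n+1))‖ ≤ 1 / gaugeD z := by
  have h0 : aeval z (P 0) = 1 := by simp [hP0]
  have h1 : aeval z (P 1) = z - b 0 := by simp [hP1]
  have hrec : ∀ n, aeval z (P (n+2)) = (z - b (n+1)) * aeval z (P (n+1)) - (a (n+1))^2 * aeval z (P n) := by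
    intro n; rw [hPrec]; simp
  have hg := gaugeD_pos.2 hz
  have fin : ∀ δ : ℝ, 0 < δ → δ ≤ ‖aeval z (P (n+1)) / aeval z (P n)‖ →
      ‖aeval z (P n) / aeval z (P (n+1))‖ ≤ 1 / δ := by
    intro δ hδ h
    rw [← inv_div, norm_inv, ← one_div]
    exact one_div_le_one_div_of_le hδ h
  have hne : aeval z (P n) ≠ 0 ∧ (|z.im| ≠ 0 → ‖aeval z (P n) / aeval z (P (n+1))‖ ≤ 1 / |z.im|) ∧
      (0 < |z.re| - 1 → ‖aeval z (P n) / aeval z (P (n+1))‖ ≤ 1 / (|z.re| - 1)) := by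
    have A : z.im ≠ 0 → aeval z (P n) ≠ 0 ∧ ‖aeval z (P n) / aeval z (P (n+1))‖ ≤ 1 / |z.im| := by
      intro him
      obtain ⟨i1, i2, i3⟩ := im_bound (p := fun n => aeval z (P n)) him h0 h1 hrec n
      refine ⟨i1, fin _ (abs_pos.2 him) ?_⟩
      have h4 : |z.im| * |z.im| ≤ |z.im| * |(aeval z (P (n+1)) / aeval z (P n)).im| := by
        rw [← abs_mul, ← abs_mul, ← sq, abs_of_nonneg (sq_nonneg _)]
        exact i3.trans (le_abs_self _)
      exact (le_of_mul_le_mul_left h4 (abs_pos.2 him)).trans (Complex.abs_im_le_norm _)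
    have B : 0 < |z.re| - 1 → aeval z (P n) ≠ 0 ∧ ‖aeval z (P n) / aeval z (P (n+1))‖ ≤ 1 / (|z.re| - 1) := by
      intro hre
      rcases lt_abs.1 (sub_pos.1 hre) with h | h
      · obtain ⟨i1, i2, i3⟩ := re_bound (p := fun n => aeval z (P n)) (g := fun n => (P n).eval 1) h h0 h1 hrec
          (fun n => (hpos n).1) (by simp [hP0]) (by simp [hP1]) (fun n => by rw [hPrec]; simp) n
        refine ⟨i1, fin _ hre ?_⟩
        rw [abs_of_pos (by linarith)]
        have := div_pos (hpos (n+1)).1 (hpos n).1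
        linarith
      · obtain ⟨i1, i2, i3⟩ := re_bound (z := -z) (b := fun n => - b n) (a := a) (p := fun n => (-1)^n * aeval z (P n)) (g := fun n => (-1)^n * (P n).eval (-1))
          (by simpa using h) (by simp [h0]) (by simp [h1]; ring) (fun n => by simp only [hrec]; push_cast; ring)
          (fun n => (hpos n).2) (by simp [hP0]) (by simp [hP1]; ring) (fun n => by simp only [hPrec]; simp; ring) n
        refine ⟨right_ne_zero_of_mul i1, fin _ hre ?_⟩
        rw [abs_of_neg (by linarith)]
        have := div_pos (hpos (n+1)).2 (hpos n).2
        have e6 : ‖(-1) ^ (n + 1) * aeval z (P (n + 1)) / ((-1) ^ n * aeval z (P n))‖ =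
            ‖aeval z (P (n + 1)) / aeval z (P n)‖ := by simp
        simp only [e6, Complex.neg_re] at i3
        linarith
    refine ⟨?_, fun h => (A (by simpa using h)).2, fun h => (B h).2⟩
    rcases lt_max_iff.1 hg with h | h
    · exact (A (abs_pos.1 h)).1
    · exact (B h).1
  refine ⟨hne.1, ?_⟩
  unfold gaugeD at hg ⊢
  rcases max_choice |z.im| (|z.re| - 1) with h | h <;> rw [h] at hg ⊢
  · exact hne.2.1 hg.ne'
  · exact hne.2.2 hg

lemma ratio_conv (hP0 : P 0 = 1) (hP1 : P 1 = X - C (b 0))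
    (hPrec : ∀ n, P (n + 2) = (X - C (b (n + 1))) * P (n + 1) - C ((a (n + 1)) ^ 2) * P n)
    (hpos : ∀ n, 0 < (P n).eval 1 ∧ 0 < (-1)^n * (P n).eval (-1))
    (ha : Tendsto a atTop (nhds (1 / 2))) (hb : Tendsto b atTop (nhds 0))
    {φ : ℂ → ℂ}
    (hφdiff : DifferentiableOn ℂ φ segIccᶜ)
    (hφsq : ∀ z ∉ segIcc, (φ z - z) ^ 2 = z ^ 2 - 1)
    (hφpos : ∀ x : ℝ, 1 < x → φ (x : ℂ) = ((x + Real.sqrt (x ^ 2 - 1) : ℝ) : ℂ)) :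
    TendstoLocallyUniformlyOn (fun n z => aeval z (P n) / aeval z (P (n+1)))
      (fun z => 2 / φ z) atTop segIccᶜ := by
  have hoff := fun {z : ℂ} (hz : z ∉ segIcc) n => P_off hP0 hP1 hPrec hpos hz n
  apply equi_conv
  · intro n
    refine DifferentiableOn.div (P n).differentiable_aeval.differentiableOn
      (P (n+1)).differentiable_aeval.differentiableOn (fun z hz => (hoff hz (n+1)).1)
  · exact continuousOn_const.div hφdiff.continuousOn (fun z hz => phi_ne hφsq hz)
  · intro z0 hz0
    have hg := gaugeD_pos.2 hz0
    obtain ⟨R, hR, h⟩ := Metric.continuous_iff.1 gaugeD_cont z0 (gaugeD z0 / 2) (by positivity)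
    have h' : ∀ z ∈ Metric.ball z0 R, gaugeD z0 / 2 < gaugeD z := by
      intro z hz
      have := h z hz
      rw [Real.dist_eq, abs_lt] at this
      linarith
    refine ⟨R, hR, 1 / (gaugeD z0 / 2), fun z hz => gaugeD_pos.1 (by linarith [h' z hz]), ?_⟩
    intro n z hz
    have hz' := h' z hz
    refine (hoff (gaugeD_pos.1 (by linarith)) n).2.trans ?_
    exact one_div_le_one_div_of_le (by positivity) hz'.le
  · intro z hz him
    have hφ1 := phi_norm hφdiff hφsq hφpos hz
    have hφi := phi_im hφsq hz hφ1 him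
    have hpi : (φ z).im ≠ 0 := fun h => by rw [h] at hφi; simp at hφi
    refine mobius_conv ha hb hφ1 (phi_quad hφsq hz) ?_ (m := 2 * |(φ z).im|) (M := 1 / gaugeD z)
      (by positivity) ?_ (fun n => (hoff hz n).2)
    · intro n
      have h0 := (hoff hz n).1
      have h1 := (hoff hz (n+1)).1
      have h2 := (hoff hz (n+2)).1
      have e : aeval z (P (n+2)) = (z - b (n+1)) * aeval z (P (n+1)) - (a (n+1))^2 * aeval z (P n) := by
        rw [hPrec]; simp
      rw [show n + 1 + 1 = n + 2 from rfl]
      have e' : z - b (n+1) - (a (n+1))^2 * (aeval z (P n) / aeval z (P (n+1))) = aeval z (P (n+2)) / aeval z (P (n+1)) := by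
        rw [e]; field_simp
      rw [e']
      field_simp
    · intro n
      have i3 := (im_bound (a := a) (b := b) (p := fun n => aeval z (P n)) him (by simp [hP0]) (by simp [hP1])
        (fun n => by rw [hPrec]; simp) n).2.2
      have h5 : z.im * (aeval z (P n) / aeval z (P (n+1))).im ≤ 0 := by
        rw [← inv_div, Complex.inv_im, neg_div, mul_neg, ← mul_div_assoc, neg_nonpos]
        exact div_nonneg (le_trans (sq_nonneg _) i3) (Complex.normSq_nonneg _)
      refine le_trans ?_ (Complex.abs_im_le_norm _)
      have h6 : (aeval z (P n) / aeval z (P (n+1)) - 2 * φ z).im = (aeval z (P n) / aeval z (P (n+1))).im - 2 * (φ z).im := by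
        simp
      rw [h6]
      set y := (aeval z (P n) / aeval z (P (n+1))).im
      refine le_of_mul_le_mul_left ?_ (abs_pos.2 him)
      rw [show |z.im| * (2 * |(φ z).im|) = 2 * |z.im * (φ z).im| by rw [abs_mul]; ring, ← abs_mul, abs_of_pos hφi,
        abs_of_neg (by nlinarith)]
      nlinarith

end ratio

lemma seg_convex : Convex ℝ segIcc :=
  (convex_Icc (-1:ℝ) 1).linear_image Complex.ofRealLI.toLinearMap

lemma deriv_off {p : Polynomial ℝ} (hd : 0 < p.natDegree) (h : ∀ z ∉ segIcc, aeval z p ≠ 0) :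
    ∀ z ∉ segIcc, aeval z (derivative p) ≠ 0 := by
  intro z hz h0
  set Q := p.map (algebraMap ℝ ℂ) with hQ
  have hQd : 0 < Q.degree := by
    rw [hQ, degree_map]; exact natDegree_pos_iff_degree_pos.1 hd
  have hsub : Q.rootSet ℂ ⊆ segIcc := by
    intro w hw
    by_contra hn
    rw [mem_rootSet, hQ, aeval_map_algebraMap] at hw
    exact h w hn hw.2
  have := rootSet_derivative_subset_convexHull_rootSet hQd
  apply hz
  apply convexHull_min hsub seg_convex
  apply this
  rw [mem_rootSet, hQ, derivative_map, aeval_map_algebraMap]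
  refine ⟨?_, h0⟩
  rw [Ne, Polynomial.map_eq_zero]
  intro hh
  rw [derivative_eq_zero.1 hh] at hd
  exact lt_irrefl _ hd

lemma logderiv_lower {p : Polynomial ℝ} (h : ∀ z ∉ segIcc, aeval z p ≠ 0) {z : ℂ} (hz : 1 < |z.re|) :
    p.natDegree * ((|z.re| - 1) / (‖z‖ + 1)^2) ≤ ‖aeval z (derivative p) / aeval z p‖ := by
  have hzs : z ∉ segIcc := gaugeD_pos.1 (lt_max_of_lt_right (by linarith))
  set Q := p.map (algebraMap ℝ ℂ) with hQ
  have hev : ∀ w, Q.eval w = aeval w p := fun w => by rw [hQ, eval_map_algebraMap]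
  have hsum : aeval z (derivative p) / aeval z p = (Q.roots.map fun w ↦ 1 / (z - w)).sum := by
    rw [← (IsAlgClosed.splits Q).eval_derivative_div_eval_of_ne_zero (by rw [hev]; exact h z hzs), hev, hQ, derivative_map,
      eval_map_algebraMap]
  have hcard : Q.roots.card = p.natDegree := by
    rw [← (IsAlgClosed.splits Q).natDegree_eq_card_roots, hQ, natDegree_map]
  have hroots : ∀ w ∈ Q.roots, w ∈ segIcc := by
    intro w hw
    by_contra hn
    have := (mem_roots'.1 hw).2
    rw [IsRoot, hev] at this
    exact h w hn this
  set κ := (|z.re| - 1) / (‖z‖ + 1)^2 with hκ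
  have hterm : ∃ s : ℝ, |s| = 1 ∧ ∀ w ∈ segIcc, κ ≤ s * (1 / (z - w)).re := by
    have gen : ∀ w ∈ segIcc, ∀ s : ℝ, |z.re| - 1 ≤ s * (z.re - w.re) → κ ≤ s * (1 / (z - w)).re := by
      intro w hw s hs
      have hne : z - w ≠ 0 := fun hh => hzs (by rw [sub_eq_zero.1 hh]; exact hw)
      have hns : 0 < Complex.normSq (z - w) := Complex.normSq_pos.2 hne
      have : (1 / (z - w)).re = (z.re - w.re) / Complex.normSq (z - w) := by
        rw [one_div, Complex.inv_re, Complex.sub_re]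
      rw [this, ← mul_div_assoc, hκ]
      apply div_le_div₀ (by linarith) hs hns
      rw [Complex.normSq_eq_norm_sq]
      have hw1 : ‖w‖ ≤ 1 := by
        obtain ⟨x, hx, rfl⟩ := hw
        rw [Complex.norm_real, Real.norm_eq_abs, abs_le]; exact ⟨hx.1, hx.2⟩
      have := norm_sub_le z w
      exact pow_le_pow_left₀ (norm_nonneg _) (by linarith) 2
    rcases lt_abs.1 hz with h1 | h1
    · refine ⟨1, by simp, fun w hw => gen w hw 1 ?_⟩
      have := mem_segIcc.1 hw
      rw [abs_of_pos (by linarith)]; linarith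
    · refine ⟨-1, by simp, fun w hw => gen w hw (-1) ?_⟩
      have := mem_segIcc.1 hw
      rw [abs_of_neg (by linarith)]; linarith
  obtain ⟨s, hs1, hs⟩ := hterm
  rw [hsum, ← hcard]
  have gen2 : ∀ M : Multiset ℂ, (∀ w ∈ M, w ∈ segIcc) → M.card * κ ≤ s * ((M.map fun w ↦ 1 / (z - w)).sum).re := by
    intro M
    induction M using Multiset.induction with
    | empty => intro _; simp
    | cons w M ih =>
      intro hM
      have h1 := ih (fun w hw => hM w (Multiset.mem_cons_of_mem hw))
      have h2 := hs w (hM w (Multiset.mem_cons_self w M))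
      rw [Multiset.map_cons, Multiset.sum_cons, Complex.add_re, Multiset.card_cons]
      push_cast
      linarith
  refine (gen2 _ hroots).trans ?_
  refine (le_abs_self _).trans ?_
  rw [abs_mul, hs1, one_mul]
  exact Complex.abs_re_le_norm _

section dratio
variable {P : ℕ → Polynomial ℝ}

lemma natDegree_iter (hPdeg : ∀ n, (P n).natDegree = n) (d n : ℕ) :
    (derivative^[d] (P n)).natDegree = n - d := by
  induction d with
  | zero => simpa using hPdeg n
  | succ d ih =>
    rw [Function.iterate_succ_apply', Polynomial.natDegree_derivative, ih]
    omega

lemma dP_off (hPdeg : ∀ n, (P n).natDegree = n)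
    (hoff : ∀ n, ∀ z ∉ segIcc, aeval z (P n) ≠ 0) (d : ℕ) :
    ∀ n, d ≤ n → ∀ z ∉ segIcc, aeval z (derivative^[d] (P n)) ≠ 0 := by
  induction d with
  | zero => intro n _; simpa using hoff n
  | succ d ih =>
    intro n hn
    rw [Function.iterate_succ_apply']
    exact deriv_off (by rw [natDegree_iter hPdeg]; omega) (ih n (by omega))

lemma dratio_conv (hPdeg : ∀ n, (P n).natDegree = n)
    (hoff : ∀ n, ∀ z ∉ segIcc, aeval z (P n) ≠ 0) {F : ℂ → ℂ} 
    (h0 : TendstoLocallyUniformlyOn (fun n z => aeval z (P n) / aeval z (P (n+1))) F atTop segIccᶜ) (d : ℕ) :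
    TendstoLocallyUniformlyOn (fun n z => aeval z (derivative^[d] (P n)) / aeval z (derivative^[d] (P (n+1)))) F atTop
      {z : ℂ | 1 < |z.re|} := by
  set V := {z : ℂ | 1 < |z.re|} with hV
  have hVo : IsOpen V := isOpen_lt continuous_const (by fun_prop)
  have hVU : ∀ z ∈ V, z ∉ segIcc := fun z hz => gaugeD_pos.1 (lt_max_of_lt_right (by have : 1 < |z.re| := hz; linarith))
  induction d with
  | zero => simpa using h0.mono hVU
  | succ d ih =>
    have hdiff : ∀ᶠ n in atTop, DifferentiableOn ℂ (fun z => aeval z (derivative^[d] (P n)) / aeval z (derivative^[d] (P (n+1)))) V := by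
      filter_upwards [eventually_ge_atTop d] with n hn
      exact DifferentiableOn.div (Polynomial.differentiable_aeval _).differentiableOn
        (Polynomial.differentiable_aeval _).differentiableOn (fun z hz => dP_off hPdeg hoff d (n+1) (by omega) z (hVU z hz))
    have hderiv := ih.deriv hdiff hVo
    have hFd : DifferentiableOn ℂ F V := ih.differentiableOn hdiff hVo
    have hg : TendstoLocallyUniformlyOn (fun n z => aeval z (derivative^[d] (P (n+1))) / aeval z (derivative^[d+1] (P (n+1))))
        (fun _ => (0:ℂ)) atTop V := by
      rw [tendstoLocallyUniformlyOn_iff_forall_isCompact hVo]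
      intro K hK hKc
      have hκc : ContinuousOn (fun z : ℂ => (‖z‖ + 1)^2 / (|z.re| - 1)) K := by
        apply ContinuousOn.div (by fun_prop) (by fun_prop)
        intro z hz
        have : 1 < |z.re| := hK hz
        linarith
      obtain ⟨B, hB⟩ := hKc.exists_bound_of_continuousOn hκc
      rw [Metric.tendstoUniformlyOn_iff]
      intro ε hε
      have hlim : Tendsto (fun n : ℕ => (|B|+1) / ((n:ℝ) + 1)) atTop (nhds 0) := by
        have := tendsto_one_div_add_atTop_nhds_zero_nat (𝕜 := ℝ)
        simpa [div_eq_mul_inv] using this.const_mul (|B|+1)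
      have hlim' := hlim.comp (tendsto_sub_atTop_nat d)
      filter_upwards [hlim'.eventually (gt_mem_nhds hε), eventually_ge_atTop d] with n hn hnd z hz
      have hz1 : 1 < |z.re| := hK hz
      have hlow := logderiv_lower (dP_off hPdeg hoff d (n+1) (by omega)) hz1
      rw [natDegree_iter hPdeg] at hlow
      rw [Function.iterate_succ_apply', dist_comm, dist_eq_norm, sub_zero, ← inv_div, norm_inv]
      set κ := (|z.re| - 1) / (‖z‖ + 1)^2 with hκ
      have hκ0 : 0 < κ := by have : 0 < |z.re| - 1 := by linarith
                             positivity
      have hκB : κ⁻¹ ≤ |B| := by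
        rw [hκ, inv_div]
        exact (le_abs_self _).trans ((hB z hz).trans (le_abs_self _))
      have hc : ((n + 1 - d : ℕ) : ℝ) = ((n - d : ℕ) : ℝ) + 1 := by
        rw [show n + 1 - d = (n - d) + 1 by omega]; push_cast; ring
      rw [hc] at hlow
      have hpos : 0 < ((n - d : ℕ) : ℝ) + 1 := by positivity
      refine lt_of_le_of_lt ?_ hn
      refine (inv_anti₀ (by positivity) hlow).trans ?_
      rw [mul_inv]
      simp only [Function.comp]
      rw [div_eq_inv_mul]
      exact mul_le_mul_of_nonneg_left (by linarith) (by positivity)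
    have hprod := hderiv.mul₀ hg (hFd.deriv hVo).continuousOn continuousOn_const
    have hsum := ih.add hprod
    have hF : TendstoLocallyUniformlyOn _ F atTop V := hsum.congr_right (g := F) (fun z _ => by simp)
    have hF' := hF
    rw [tendstoLocallyUniformlyOn_iff_forall_isCompact hVo] at hF' ⊢
    intro K hK hKc
    refine (hF' K hK hKc).congr ?_
    filter_upwards [eventually_ge_atTop d] with n hn z hz
    have hzs := hVU z (hK hz)
    have h1 := dP_off hPdeg hoff d (n+1) (by omega) z hzs
    have h2 := dP_off hPdeg hoff (d+1) (n+1) (by omega) z hzs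
    simp only [Pi.add_apply, Pi.mul_apply, Function.comp]
    have hd1 : HasDerivAt (fun z => aeval z (derivative^[d] (P n)) / aeval z (derivative^[d] (P (n+1)))) _ z :=
      (Polynomial.hasDerivAt_aeval (derivative^[d] (P n)) z).fun_div (Polynomial.hasDerivAt_aeval (derivative^[d] (P (n+1))) z) h1
    rw [hd1.deriv]
    simp only [Function.iterate_succ_apply'] at h2 ⊢
    field_simp
    ring

end dratio

lemma W_conv {α : Type*} {K : Set α} {G : ℕ → α → ℂ} {h t : ℕ → ℂ} {R : α → ℂ} {r : ℝ}
    (hr : r < 1) (hR : ∀ z ∈ K, ‖1/4 * R z‖ ≤ r)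
    (hh : ∀ n, h n ≠ 0) (hsucc : ∀ n, h (n+1) = t n * h n)
    (hG : ∀ n, ∀ z ∈ K, G n z = 0 → ∀ k < n, G k z = 0)
    (hb : ∀ n, ∃ C, ∀ z ∈ K, ‖G n z / G (n+1) z‖ ≤ C)
    (ht : Tendsto t atTop (nhds (1/4)))
    (hq : TendstoUniformlyOn (fun n z => G n z / G (n+1) z) R atTop K) :
    TendstoUniformlyOn (fun n z => h n / G n z * ∑ k ∈ Finset.range n, G k z / h k)
      (fun z => (1/4 * R z) / (1 - 1/4 * R z)) atTop K := by
  apply unif_W (q := fun n z => t n * (G n z / G (n+1) z)) hr hR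
  · intro z _; simp
  · intro n z hz
    rw [Finset.sum_range_succ, hsucc]
    by_cases h0 : G n z = 0
    · have : ∑ k ∈ Finset.range n, G k z / h k = 0 :=
        Finset.sum_eq_zero fun k hk => by rw [hG n z hz h0 k (Finset.mem_range.1 hk), zero_div]
      rw [this, h0]; simp
    · have := hh n
      field_simp
      ring
  · intro n
    obtain ⟨C, hC⟩ := hb n
    refine ⟨‖t n‖ * C, fun z hz => ?_⟩
    rw [norm_mul]
    exact mul_le_mul_of_nonneg_left (hC z hz) (norm_nonneg _)
  · rw [Metric.tendstoUniformlyOn_iff] at hq ⊢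
    intro ε hε
    have hlim : Tendsto (fun n => ‖t n - 1/4‖ * 4) atTop (nhds 0) := by
      have := (ht.sub_const (1/4)).norm.mul_const 4
      simpa using this
    have hlim2 : Tendsto (fun n => ‖t n‖) atTop (nhds (1/4)) := by
      have := ht.norm
      simpa using this
    filter_upwards [hq (ε/2) (half_pos hε), hlim.eventually (gt_mem_nhds (half_pos hε)),
      hlim2.eventually (gt_mem_nhds (show (1/4:ℝ) < 1 by norm_num))] with n h1 h2 h3 z hz
    have h4 := h1 z hz
    rw [dist_eq_norm] at h4 ⊢
    have e : 1/4 * R z - t n * (G n z / G (n+1) z) =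
      t n * (R z - G n z / G (n+1) z) - (t n - 1/4) * R z := by ring
    have hRz : ‖R z‖ ≤ 4 := by
      have := hR z hz
      rw [norm_mul] at this
      norm_num at this
      linarith
    rw [e]
    have h5 : ‖(t n - 1/4) * R z‖ ≤ ‖t n - 1/4‖ * 4 := by
      rw [norm_mul]; exact mul_le_mul_of_nonneg_left hRz (norm_nonneg _)
    have h6 : ‖t n * (R z - G n z / G (n+1) z)‖ ≤ ε/2 := by
      rw [norm_mul]
      have := norm_nonneg (R z - G n z / G (n+1) z)
      nlinarith
    have := norm_sub_le (t n * (R z - G n z / G (n+1) z)) ((t n - 1/4) * R z)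
    linarith

section cauchy
variable {N : ℕ} {f : Fin N → ℂ}

lemma cau_sum (v : Fin N → ℂ) (w : ℂ) (hw : ∀ j, w * f j - 1 ≠ 0) :
    (∑ j, C (v j) * ∏ k ∈ Finset.univ.erase j, (C (f k) * X - 1)).eval w =
      (∏ k, (w * f k - 1)) * ∑ j, v j / (w * f j - 1) := by
  rw [eval_finsetSum, Finset.mul_sum]
  refine Finset.sum_congr rfl fun j _ => ?_
  rw [eval_mul, eval_C, eval_prod, ← Finset.mul_prod_erase Finset.univ (fun k => w * f k - 1) (Finset.mem_univ j)]
  have : ∀ k, eval w (C (f k) * X - 1) = w * f k - 1 := fun k => by simp only [eval_sub, eval_mul, eval_C, eval_X, eval_one]; ring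
  simp only [this]
  field_simp [hw j]

lemma cau_deg (v : Fin N → ℂ) :
    (∑ j, C (v j) * ∏ k ∈ Finset.univ.erase j, (C (f k) * X - 1)).degree < N := by
  refine lt_of_le_of_lt (degree_sum_le _ _) ?_
  refine (Finset.sup_lt_iff (WithBot.bot_lt_coe N)).2 ?_
  intro j _
  refine lt_of_le_of_lt ((degree_mul_le _ _).trans (add_le_add_left degree_C_le _)) ?_
  rw [zero_add]
  have h1 : (∏ k ∈ Finset.univ.erase j, (C (f k) * X - 1)).degree ≤ ((N - 1 : ℕ) : WithBot ℕ) := by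
    refine (degree_prod_le _ _).trans ?_
    refine (Finset.sum_le_card_nsmul _ _ 1 ?_).trans ?_
    · intro k _
      refine (degree_sub_le _ _).trans (max_le (degree_C_mul_X_le _) ?_)
      rw [degree_one]; exact zero_le_one
    · rw [Finset.card_erase_of_mem (Finset.mem_univ j)]
      simp
  refine lt_of_le_of_lt h1 ?_
  have := j.pos
  exact WithBot.coe_lt_coe.2 (by omega : N - 1 < N)

lemma cau_det (hinj : Function.Injective f) (hf0 : ∀ j, f j ≠ 0) (hf : ∀ i j, f i * f j - 1 ≠ 0) :
    (Matrix.of fun i j => 1 / (f i * f j - 1) : Matrix (Fin N) (Fin N) ℂ).det ≠ 0 := by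
  intro h
  obtain ⟨v, hv0, hv⟩ := Matrix.exists_mulVec_eq_zero_iff.2 h
  apply hv0
  have hp : (∑ j, C (v j) * ∏ k ∈ Finset.univ.erase j, (C (f k) * X - 1)) = 0 := by
    apply eq_zero_of_degree_lt_of_eval_index_eq_zero (s := Finset.univ) (v := f) (hinj.injOn)
    · simpa using cau_deg (f := f) v
    · intro i _
      rw [cau_sum v (f i) (hf i)]
      have := congrFun hv i
      simp only [Matrix.mulVec, dotProduct, Matrix.of_apply, Pi.zero_apply] at this
      have h2 : ∑ j, v j / (f i * f j - 1) = 0 := by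
        rw [← this]; exact Finset.sum_congr rfl fun j _ => by ring
      rw [h2, mul_zero]
  funext j
  have h1 := congrArg (eval (1 / f j)) hp
  rw [eval_finsetSum, eval_zero, Finset.sum_eq_single j] at h1
  · rw [eval_mul, eval_C, eval_prod] at h1
    rcases mul_eq_zero.1 h1 with h2 | h2
    · simpa using h2
    · exfalso
      obtain ⟨k, hk, hk0⟩ := Finset.prod_eq_zero_iff.1 h2
      simp only [eval_sub, eval_mul, eval_C, eval_X, eval_one] at hk0
      have := hf0 j
      field_simp at hk0
      exact (Finset.ne_of_mem_erase hk) (hinj (sub_eq_zero.1 (by simpa using hk0)))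
  · intro i _ hij
    rw [eval_mul, eval_prod]
    have : ∏ k ∈ Finset.univ.erase i, eval (1 / f j) (C (f k) * X - 1) = 0 := by
      apply Finset.prod_eq_zero (i := j) (Finset.mem_erase.2 ⟨hij.symm, Finset.mem_univ _⟩)
      have := hf0 j
      simp [this]
    rw [this, mul_zero]
  · intro h; exact absurd (Finset.mem_univ j) h

lemma cau_ident (hinj : Function.Injective f) (hf0 : ∀ j, f j ≠ 0) (hf : ∀ i j, f i * f j - 1 ≠ 0)
    (x : Fin N → ℂ) (hx : ∀ i, ∑ j, x j / (f i * f j - 1) = 1) (w : ℂ) (hw : ∀ j, w * f j - 1 ≠ 0) :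
    1 - ∑ j, x j / (w * f j - 1) = ∏ j, (f j * (w - f j) / (w * f j - 1)) := by
  set D : Polynomial ℂ := ∏ k, (C (f k) * X - 1) with hD
  set E : Polynomial ℂ := ∏ k, (C (f k) * (X - C (f k))) with hE
  have e1 : ∀ k, degree (C (f k) * X - 1) = 1 := fun k => by
    have := degree_linear (a := f k) (b := -1) (hf0 k)
    simpa [sub_eq_add_neg] using this
  have l1 : ∀ k, leadingCoeff (C (f k) * X - 1) = f k := fun k => by
    have := leadingCoeff_linear (a := f k) (b := -1) (hf0 k)
    simpa [sub_eq_add_neg] using this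
  have e2 : ∀ k, degree (C (f k) * (X - C (f k))) = 1 := fun k => by
    rw [degree_C_mul (hf0 k), degree_X_sub_C]
  have dD : D.degree = N := by
    rw [hD, degree_prod]; simp [e1]
  have dE : E.degree = N := by
    rw [hE, degree_prod]; simp only [e2]; simp
  have hDE : (D - E).degree < N := by
    rw [← dD]
    apply degree_sub_lt_left (by rw [dD, dE])
    · intro h; rw [h] at dD; simp at dD
    · rw [hD, hE, leadingCoeff_prod, leadingCoeff_prod]
      simp only [l1, leadingCoeff_mul, leadingCoeff_C, leadingCoeff_X_sub_C, mul_one]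
  have hDev : ∀ w, D.eval w = ∏ k, (w * f k - 1) := fun w => by
    rw [hD, eval_prod]; exact Finset.prod_congr rfl fun k _ => by simp only [eval_sub, eval_mul, eval_C, eval_X, eval_one]; ring
  have hEev : ∀ w, E.eval w = ∏ k, (f k * (w - f k)) := fun w => by
    rw [hE, eval_prod]; exact Finset.prod_congr rfl fun k _ => by simp
  have hp : D - E - (∑ j, C (x j) * ∏ k ∈ Finset.univ.erase j, (C (f k) * X - 1)) = 0 := by
    apply eq_zero_of_degree_lt_of_eval_index_eq_zero (s := Finset.univ) (v := f) (hinj.injOn)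
    · rw [Finset.card_univ, Fintype.card_fin]
      exact lt_of_le_of_lt (degree_sub_le _ _) (max_lt hDE (cau_deg (f := f) x))
    · intro i _
      rw [eval_sub, eval_sub, cau_sum x (f i) (hf i), hx i, hDev, hEev,
        Finset.prod_eq_zero (f := fun k => f k * (f i - f k)) (Finset.mem_univ i) (show f i * (f i - f i) = 0 by ring)]
      ring
  have h1 := congrArg (eval w) hp
  rw [eval_sub, eval_sub, cau_sum x w hw, hDev, hEev, eval_zero] at h1
  have hne : ∏ k, (w * f k - 1) ≠ 0 := Finset.prod_ne_zero_iff.2 fun j _ => hw j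
  rw [Finset.prod_div_distrib, eq_div_iff hne]
  linear_combination h1

end cauchy

lemma lin_conv {N : ℕ} {A : ℕ → Matrix (Fin N) (Fin N) ℂ} {M : Matrix (Fin N) (Fin N) ℂ}
    (hA : Tendsto A atTop (nhds M)) (hM : M.det ≠ 0) {x : ℕ → Fin N → ℂ}
    (hx : ∀ᶠ n in atTop, (A n).mulVec (x n) = 1) :
    ∃ ξ, M.mulVec ξ = 1 ∧ Tendsto x atTop (nhds ξ) := by
  have hc1 : Tendsto (fun n => (A n).det) atTop (nhds M.det) :=
    ((continuous_id.matrix_det).tendsto M).comp hA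
  have hc2 : Tendsto (fun n => (A n).adjugate.mulVec (1 : Fin N → ℂ)) atTop (nhds (M.adjugate.mulVec 1)) :=
    (((continuous_id.matrix_adjugate).matrix_mulVec continuous_const).tendsto M).comp hA
  refine ⟨M.det⁻¹ • M.adjugate.mulVec 1, ?_, ?_⟩
  · rw [Matrix.mulVec_smul, Matrix.mulVec_mulVec, Matrix.mul_adjugate, Matrix.smul_mulVec, Matrix.one_mulVec,
      smul_smul, inv_mul_cancel₀ hM, one_smul]
  · refine ((hc1.inv₀ hM).smul hc2).congr' ?_
    filter_upwards [hx, hc1.eventually_ne hM] with n hn hd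
    rw [← hn, Matrix.mulVec_mulVec, Matrix.adjugate_mul, Matrix.smul_mulVec, Matrix.one_mulVec, smul_smul,
      inv_mul_cancel₀ hd, one_smul]

lemma unif_sum {N : ℕ} {K : Set ℂ} (hK : IsCompact K) {x : ℕ → Fin N → ℂ} {ξ : Fin N → ℂ}
    (hx : Tendsto x atTop (nhds ξ)) {W : Fin N → ℕ → ℂ → ℂ} {Ω : Fin N → ℂ → ℂ}
    (hΩ : ∀ j, ContinuousOn (Ω j) K)
    (hW : ∀ j, TendstoUniformlyOn (W j) (Ω j) atTop K) :
    TendstoUniformlyOn (fun n z => 1 - ∑ j, x n j * W j n z) (fun z => 1 - ∑ j, ξ j * Ω j z) atTop K := by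
  have h1 : ∀ j, TendstoUniformlyOn (fun n z => x n j * W j n z) (fun z => ξ j * Ω j z) atTop K := by
    intro j
    rw [← tendstoLocallyUniformlyOn_iff_tendstoUniformlyOn_of_compact hK]
    exact ((((tendsto_pi_nhds.1 hx j).tendstoUniformlyOn_const K).tendstoLocallyUniformlyOn).mul₀
      (hW j).tendstoLocallyUniformlyOn continuousOn_const (hΩ j))
  have h2 : ∀ s : Finset (Fin N), TendstoUniformlyOn (fun n z => ∑ j ∈ s, x n j * W j n z)
      (fun z => ∑ j ∈ s, ξ j * Ω j z) atTop K := by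
    intro s
    induction s using Finset.induction with
    | empty => simpa using (tendsto_const_nhds (x := (0:ℂ)) (f := (atTop : Filter ℕ))).tendstoUniformlyOn_const K
    | insert i s hi ih =>
      simp only [Finset.sum_insert hi]
      exact (h1 i).add ih
  exact (((tendsto_const_nhds (x := (1:ℂ)) (f := (atTop : Filter ℕ))).tendstoUniformlyOn_const K)).sub (h2 _)

/-- Relative asymptotics: for a sequentially-ordered discrete Sobolev
inner product with `μ` in the Nevai class `M(0,1)`,
`S_n / P_n → ∏_j (φ(z) - φ(c j))² / (2 φ(z) (z - c j))` uniformly on compact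
subsets of `ℂ ∖ [-1,1]`. -/
theorem statement10
    (μ : Measure ℝ) [IsFiniteMeasure μ]
    (hμsupp : μ (Set.Icc (-1:ℝ) 1)ᶜ = 0)
    (hμinf : ∀ p : Polynomial ℝ, p ≠ 0 → 0 < ∫ x in Set.Icc (-1:ℝ) 1, (p.eval x) ^ 2 ∂μ)
    {N : ℕ} (c : Fin N → ℝ) (d : Fin N → ℕ)
    (hc : ∀ j, c j ∉ Set.Icc (-1:ℝ) 1)
    (η : Fin N → ℝ) (hη : ∀ j, 0 < η j)
    (hseq : SeqOrdered c d)
    (S : ℕ → Polynomial ℝ)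
    (hSmonic : ∀ n, (S n).Monic) (hSdeg : ∀ n, (S n).natDegree = n)
    (hSorth : ∀ n, ∀ m < n, sobInner μ c d η (X ^ m) (S n) = 0)
    (hsupp : ∀ x ∈ Set.Icc (-1:ℝ) 1, ∀ ε > 0, 0 < μ (Metric.ball x ε))
    (P : ℕ → Polynomial ℝ) (a b : ℕ → ℝ)
    (hPmonic : ∀ n, (P n).Monic) (hPdeg : ∀ n, (P n).natDegree = n)
    (hPorth : ∀ n, ∀ m < n, (∫ x in Set.Icc (-1:ℝ) 1, x ^ m * (P n).eval x ∂μ) = 0)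
    (hP0 : P 0 = 1) (hP1 : P 1 = X - C (b 0))
    (hPrec : ∀ n, P (n + 2) = (X - C (b (n + 1))) * P (n + 1) - C ((a (n + 1)) ^ 2) * P n)
    (ha : Tendsto a atTop (nhds (1 / 2))) (hb : Tendsto b atTop (nhds 0))
    (φ : ℂ → ℂ)
    (hφdiff : DifferentiableOn ℂ φ segIccᶜ)
    (hφsq : ∀ z ∉ segIcc, (φ z - z) ^ 2 = z ^ 2 - 1)
    (hφpos : ∀ x : ℝ, 1 < x → φ (x : ℂ) = ((x + Real.sqrt (x ^ 2 - 1) : ℝ) : ℂ))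
    (K : Set ℂ) (hK : IsCompact K) (hKsub : ∀ z ∈ K, z ∉ segIcc) :
    TendstoUniformlyOn
      (fun (n : ℕ) (z : ℂ) => aeval z (S n) / aeval z (P n))
      (fun z : ℂ => ∏ j, (φ z - φ ((c j : ℝ) : ℂ)) ^ 2 / (2 * φ z * (z - ((c j : ℝ) : ℂ))))
      atTop K := by
  set L := Lmu μ with hL
  have hpos : ∀ p : Polynomial ℝ, p ≠ 0 → 0 < L (p * p) := by
    intro p hp
    have := hμinf p hp
    rw [hL, Lmu_apply]
    simpa only [eval_mul, sq] using this
  have hPo : ∀ n, ∀ m < n, L (X ^ m * P n) = 0 := by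
    intro n m hm
    have := hPorth n m hm
    rw [hL, Lmu_apply]
    simpa only [eval_mul, eval_pow, eval_X] using this
  have hSo : ∀ n, ∀ m < n, L (X^m * S n) +
      ∑ j, η j * ((derivative^[d j] (X^m : Polynomial ℝ)).eval (c j)) * ((derivative^[d j] (S n)).eval (c j)) = 0 := by
    intro n m hm
    have := hSorth n m hm
    rw [hL, Lmu_apply]
    simpa only [sobInner, eval_mul] using this
  have hPpos : ∀ n, 0 < (P n).eval 1 ∧ 0 < (-1)^n * (P n).eval (-1) :=
    fun n => L_pos_one μ hpos (hPmonic n) (hPdeg n) (hPo n)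
  have hoff : ∀ n, ∀ z ∉ segIcc, aeval z (P n) ≠ 0 := fun n z hz => (P_off hP0 hP1 hPrec hPpos hz n).1
  have hrat := ratio_conv hP0 hP1 hPrec hPpos ha hb hφdiff hφsq hφpos
  have hφn : ∀ z ∉ segIcc, 1 < ‖φ z‖ := fun z hz => phi_norm hφdiff hφsq hφpos hz
  have hφ0 : ∀ z ∉ segIcc, φ z ≠ 0 := fun z hz h0 => by
    have := hφn z hz
    rw [h0, norm_zero] at this; linarith
  have hcs : ∀ j, ((c j : ℝ) : ℂ) ∉ segIcc := by
    rintro j ⟨x, hx, hxc⟩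
    rw [Complex.ofReal_inj.1 hxc] at hx
    exact hc j hx
  have hcV : ∀ j, ((c j : ℝ) : ℂ) ∈ {z : ℂ | 1 < |z.re|} := by
    intro j
    have := hc j
    rw [Set.mem_ofPred_eq, Complex.ofReal_re]
    by_contra hn
    exact this (abs_le.1 (not_lt.1 hn))
  have hcinj : Function.Injective c := by
    have key : ∀ i j, i < j → c i ≠ c j := by
      intro i j hij h
      apply hseq.2 j
      rw [← h]
      exact subset_convexHull ℝ _ (Or.inr ⟨i, hij, rfl⟩)
    intro i j h
    rcases lt_trichotomy i j with h1 | h1 | h1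
    · exact absurd h (key i j h1)
    · exact h1
    · exact absurd h.symm (key j i h1)
  set f : Fin N → ℂ := fun j => φ ((c j : ℝ) : ℂ) with hf
  have hf1 : ∀ j, 1 < ‖f j‖ := fun j => hφn _ (hcs j)
  have hf0 : ∀ j, f j ≠ 0 := fun j => hφ0 _ (hcs j)
  have hfinj : Function.Injective f := by
    intro i j h
    apply hcinj
    have h1 := phi_z hφsq (hcs i)
    have h2 := phi_z hφsq (hcs j)
    have h3 : φ ((c i : ℝ) : ℂ) = φ ((c j : ℝ) : ℂ) := h
    rw [h3, ← h2] at h1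
    exact Complex.ofReal_inj.1 h1
  have hwf : ∀ w : ℂ, 1 < ‖w‖ → ∀ j, w * f j - 1 ≠ 0 := by
    intro w hw j h
    have h1 : w * f j = 1 := sub_eq_zero.1 h
    have h2 := congrArg norm h1
    rw [norm_mul, norm_one] at h2
    nlinarith [hf1 j]
  set h : ℕ → ℂ := fun n => ((L (P n * P n) : ℝ) : ℂ) with hh
  have hhpos : ∀ n, 0 < L (P n * P n) := fun n => hpos _ (hPmonic n).ne_zero
  have hh0 : ∀ n, h n ≠ 0 := fun n => Complex.ofReal_ne_zero.2 (hhpos n).ne'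
  set t : ℕ → ℂ := fun n => (((a (n+1))^2 : ℝ) : ℂ) with ht
  have hsucc : ∀ n, h (n+1) = t n * h n := by
    intro n
    simp only [hh, ht]
    rw [h_succ hPdeg hPmonic hPo hPrec n, Complex.ofReal_mul]
  have htlim : Tendsto t atTop (nhds (1/4)) := by
    have h1 : Tendsto (fun n => (a (n+1))^2) atTop (nhds ((1/2)^2)) := (ha.comp (tendsto_add_atTop_nat 1)).pow 2
    have h2 := (Complex.continuous_ofReal.tendsto _).comp h1
    have e : (((1/2)^2 : ℝ) : ℂ) = 1/4 := by push_cast; norm_num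
    rw [e] at h2
    exact h2
  set B : Fin N → ℕ → ℂ := fun j n => aeval ((c j : ℝ) : ℂ) (derivative^[d j] (P n)) with hB
  have hBne : ∀ j n, d j ≤ n → B j n ≠ 0 := fun j n hn => dP_off hPdeg hoff (d j) n hn _ (hcs j)
  have hBz : ∀ j n, n < d j → B j n = 0 := by
    intro j n hn
    simp only [hB]
    rw [iterate_derivative_eq_zero (by rw [hPdeg]; exact hn), map_zero]
  have hBzz : ∀ j n, B j n = 0 → ∀ k < n, B j k = 0 := by
    intro j n h0 k hk
    apply hBz
    by_contra hn
    exact hBne j n (by omega) h0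
  have hBlim : ∀ j, Tendsto (fun n => B j n / B j (n+1)) atTop (nhds (2 / f j)) :=
    fun j => (dratio_conv hPdeg hoff hrat (d j)).tendsto_at (hcV j)
  -- the kernel sums
  set W : Fin N → ℕ → ℂ → ℂ := fun j n z =>
    h n / (aeval z (P n) * B j n) * ∑ k ∈ Finset.range n, (aeval z (P k) * B j k) / h k with hWdef
  have hφc : ContinuousOn φ K := hφdiff.continuousOn.mono hKsub
  have hKrat : TendstoUniformlyOn (fun n z => aeval z (P n) / aeval z (P (n+1))) (fun z => 2 / φ z) atTop K :=
    (tendstoLocallyUniformlyOn_iff_forall_isCompact U_open).1 hrat K hKsub hK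
  have hWlim : ∀ j, TendstoUniformlyOn (W j) (fun z => 1 / (φ z * f j - 1)) atTop K := by
    intro j
    have hgc : ContinuousOn (fun z => 1 / gaugeD z) K :=
      continuousOn_const.div gaugeD_cont.continuousOn (fun z hz => (gaugeD_pos.2 (hKsub z hz)).ne')
    obtain ⟨C0, hC0⟩ := hK.exists_bound_of_continuousOn hgc
    have key := W_conv (K := K) (G := fun n z => aeval z (P n) * B j n) (h := h) (t := t)
      (R := fun z => 2 / φ z * (2 / f j)) (r := ‖f j‖⁻¹) (inv_lt_one_of_one_lt₀ (hf1 j)) ?_ hh0 hsucc ?_ ?_ htlim ?_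
    · refine key.congr_right fun z hz => ?_
      have h1 := hφ0 z (hKsub z hz)
      have h2 := hf0 j
      have h3 := hwf _ (hφn z (hKsub z hz)) j
      have e : 1/4 * (2 / φ z * (2 / f j)) = 1 / (φ z * f j) := by field_simp; norm_num
      simp only [e]
      have h4 : φ z * f j ≠ 0 := mul_ne_zero h1 h2
      rw [one_sub_div h4, div_div_div_cancel_right₀ h4]
    · intro z hz
      have h1 := hφn z (hKsub z hz)
      have e : 1/4 * (2 / φ z * (2 / f j)) = (φ z)⁻¹ * (f j)⁻¹ := by ring
      rw [e, norm_mul, norm_inv, norm_inv]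
      exact mul_le_of_le_one_left (by positivity) (inv_le_one_of_one_le₀ h1.le)
    · intro n z hz h0 k hk
      rcases mul_eq_zero.1 h0 with h1 | h1
      · exact absurd h1 (hoff n z (hKsub z hz))
      · simp only [hBzz j n h1 k hk, mul_zero]
    · intro n
      refine ⟨C0 * ‖B j n / B j (n+1)‖, fun z hz => ?_⟩
      rw [mul_div_mul_comm, norm_mul]
      refine mul_le_mul_of_nonneg_right ?_ (norm_nonneg _)
      exact ((P_off hP0 hP1 hPrec hPpos (hKsub z hz) n).2).trans ((le_abs_self _).trans (hC0 z hz))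
    · rw [← tendstoLocallyUniformlyOn_iff_tendstoUniformlyOn_of_compact hK]
      have h1 := hKrat.tendstoLocallyUniformlyOn.mul₀ ((hBlim j).tendstoUniformlyOn_const K).tendstoLocallyUniformlyOn
        (continuousOn_const.div hφc (fun z hz => hφ0 z (hKsub z hz))) continuousOn_const
      refine h1.congr fun n z hz => ?_
      simp only [Pi.mul_apply]
      rw [mul_div_mul_comm]
  set Mn : ℕ → Fin N → Fin N → ℂ := fun n i j =>
    h n / (B i n * B j n) * ∑ k ∈ Finset.range n, (B i k * B j k) / h k with hMn
  have hMlim : ∀ i j, Tendsto (fun n => Mn n i j) atTop (nhds (1 / (f i * f j - 1))) := by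
    intro i j
    have key := W_conv (K := (Set.univ : Set Unit)) (G := fun n _ => B i n * B j n) (h := h) (t := t)
      (R := fun _ => 2 / f i * (2 / f j)) (r := ‖f j‖⁻¹) (inv_lt_one_of_one_lt₀ (hf1 j)) ?_ hh0 hsucc ?_ ?_ htlim ?_
    · have h5 := key.tendsto_at (Set.mem_univ ())
      have h1 := hf0 i
      have h2 := hf0 j
      have e : 1/4 * (2 / f i * (2 / f j)) = 1 / (f i * f j) := by field_simp; norm_num
      simp only [e] at h5
      have h4 : f i * f j ≠ 0 := mul_ne_zero h1 h2
      rw [one_sub_div h4, div_div_div_cancel_right₀ h4] at h5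
      exact h5
    · intro z hz
      have h1 := hf1 i
      have e : 1/4 * (2 / f i * (2 / f j)) = (f i)⁻¹ * (f j)⁻¹ := by ring
      rw [e, norm_mul, norm_inv, norm_inv]
      exact mul_le_of_le_one_left (by positivity) (inv_le_one_of_one_le₀ h1.le)
    · intro n z hz h0 k hk
      rcases mul_eq_zero.1 h0 with h1 | h1
      · simp only [hBzz i n h1 k hk, zero_mul]
      · simp only [hBzz j n h1 k hk, mul_zero]
    · intro n
      exact ⟨_, fun z hz => le_rfl⟩
    · have h1 := ((hBlim i).mul (hBlim j)).tendstoUniformlyOn_const (Set.univ : Set Unit)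
      simp only [mul_div_mul_comm]
      exact h1
  set Dn : ℕ → Fin N → ℂ := fun n i => h n / (η i * (B i n)^2) with hDn
  have hηc : ∀ i, ((η i : ℝ) : ℂ) ≠ 0 := fun i => Complex.ofReal_ne_zero.2 (hη i).ne'
  have hDlim : ∀ i, Tendsto (fun n => Dn n i) atTop (nhds 0) := by
    intro i
    have hne : ∀ n, d i ≤ n → Dn n i ≠ 0 := fun n hn =>
      div_ne_zero (hh0 n) (mul_ne_zero (hηc i) (pow_ne_zero _ (hBne i n hn)))
    have hl : Tendsto (fun n => ‖Dn (n+1) i‖ / ‖Dn n i‖) atTop (nhds ‖1/4 * (2 / f i)^2‖) := by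
      refine (htlim.mul ((hBlim i).pow 2)).norm.congr' ?_
      filter_upwards [eventually_ge_atTop (d i)] with n hn
      rw [← norm_div]
      congr 1
      simp only [hDn]
      rw [hsucc]
      have h1 := hBne i n hn
      have h2 := hBne i (n+1) (by omega)
      have h3 := hh0 n
      have h4 := hηc i
      field_simp
    refine (summable_of_ratio_test_tendsto_lt_one ?_ ?_ hl).tendsto_atTop_zero
    · have e : 1/4 * (2 / f i)^2 = (f i)⁻¹ * (f i)⁻¹ := by ring
      rw [e, norm_mul, norm_inv]
      have := inv_lt_one_of_one_lt₀ (hf1 i)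
      have h0 : 0 ≤ ‖f i‖⁻¹ := by positivity
      nlinarith
    · filter_upwards [eventually_ge_atTop (d i)] with n hn using hne n hn
  set s : Fin N → ℕ → ℂ := fun j n => aeval ((c j : ℝ) : ℂ) (derivative^[d j] (S n)) with hs
  have hcast : ∀ (x : ℝ) (p : Polynomial ℝ), ((p.eval x : ℝ) : ℂ) = aeval (x : ℂ) p := fun x p =>
    (aeval_algebraMap_apply_eq_algebraMap_eval x p).symm
  have hrepr : ∀ n, ∀ T : Polynomial ℝ →ₗ[ℝ] ℂ, T (S n) = T (P n) -
      ∑ j, η j * s j n * ∑ k ∈ Finset.range n, (T (P k) * B j k) / h k := by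
    intro n T
    have h1 := S_repr hpos hPdeg hPmonic hPo c d η (hSmonic n) (hSdeg n) (hSo n)
    have h2 := congrArg T h1
    rw [map_sub, map_sum] at h2
    rw [h2]
    congr 1
    refine Finset.sum_congr rfl fun j _ => ?_
    rw [map_sum, Finset.mul_sum]
    refine Finset.sum_congr rfl fun k _ => ?_
    rw [map_smul, Complex.real_smul]
    push_cast
    rw [hcast, hcast]
    simp only [hs, hB, hh]
    ring
  set x : ℕ → Fin N → ℂ := fun n j => η j * s j n * B j n / h n with hx
  have hev : ∀ᶠ n in atTop, ∀ j, d j ≤ n := by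
    rw [eventually_all]
    exact fun j => eventually_ge_atTop (d j)
  have hsys : ∀ᶠ n in atTop, (Matrix.of (Mn n) + Matrix.diagonal (Dn n)).mulVec (x n) = 1 := by
    filter_upwards [hev] with n hn
    funext i
    have h1 := hrepr n (((aeval ((c i : ℝ) : ℂ)).toLinearMap : Polynomial ℝ →ₗ[ℝ] ℂ).comp (derivative ^ (d i)))
    have h2 : ∀ p : Polynomial ℝ, (((aeval ((c i : ℝ) : ℂ)).toLinearMap : Polynomial ℝ →ₗ[ℝ] ℂ).comp (derivative ^ (d i))) p
      = aeval ((c i : ℝ) : ℂ) (derivative^[d i] p) := fun p => by simp [Module.End.pow_apply]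
    simp only [h2] at h1
    have h3 : s i n = B i n - ∑ j, η j * s j n * ∑ k ∈ Finset.range n, (B i k * B j k) / h k := h1
    have hBi := hBne i n (hn i)
    have e1 : ∑ j, Mn n i j * x n j = (∑ j, η j * s j n * ∑ k ∈ Finset.range n, (B i k * B j k) / h k) / B i n := by
      rw [Finset.sum_div]
      refine Finset.sum_congr rfl fun j _ => ?_
      simp only [hMn, hx]
      have h4 := hBne j n (hn j)
      have h5 := hh0 n
      generalize ∑ k ∈ Finset.range n, (B i k * B j k) / h k = Sg
      field_simp
    have e2 : Dn n i * x n i = s i n / B i n := by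
      simp only [hDn, hx]
      have h5 := hh0 n
      have h6 := hηc i
      field_simp
    rw [Matrix.add_mulVec, Pi.add_apply, Matrix.mulVec_diagonal, e2, Pi.one_apply]
    simp only [Matrix.mulVec, dotProduct, Matrix.of_apply]
    rw [e1, ← add_div, div_eq_one_iff_eq hBi]
    linear_combination h3
  have hAlim : Tendsto (fun n => Matrix.of (Mn n) + Matrix.diagonal (Dn n)) atTop
      (nhds (Matrix.of fun i j => 1 / (f i * f j - 1))) := by
    refine tendsto_pi_nhds.2 fun i => tendsto_pi_nhds.2 fun j => ?_
    have h1 : Tendsto (fun n => (Matrix.diagonal (Dn n)) i j) atTop (nhds 0) := by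
      by_cases hij : i = j
      · subst hij
        simpa using hDlim i
      · simp only [Matrix.diagonal_apply_ne _ hij]
        exact tendsto_const_nhds
    have h2 := (hMlim i j).add h1
    rw [add_zero] at h2
    exact h2
  obtain ⟨ξ, hξ, hxlim⟩ := lin_conv hAlim (cau_det hfinj hf0 fun i j => hwf _ (hf1 i) j) hsys
  have hξ' : ∀ i, ∑ j, ξ j / (f i * f j - 1) = 1 := by
    intro i
    have := congrFun hξ i
    simp only [Matrix.mulVec, dotProduct, Matrix.of_apply, Pi.one_apply] at this
    refine Eq.trans ?_ this
    exact Finset.sum_congr rfl fun j _ => by ring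
  have hΩc : ∀ j, ContinuousOn (fun z => 1 / (φ z * f j - 1)) K := fun j =>
    continuousOn_const.div ((hφc.mul continuousOn_const).sub continuousOn_const)
      (fun z hz => hwf _ (hφn z (hKsub z hz)) j)
  have hfin := unif_sum hK hxlim hΩc hWlim
  refine (hfin.congr ?_).congr_right ?_
  · filter_upwards [hev] with n hn z hz
    have h1 := hrepr n ((aeval z).toLinearMap : Polynomial ℝ →ₗ[ℝ] ℂ)
    simp only [AlgHom.toLinearMap_apply] at h1
    have hP := hoff n z (hKsub z hz)
    simp only
    rw [h1, sub_div, div_self hP, Finset.sum_div]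
    congr 1
    refine Finset.sum_congr rfl fun j _ => ?_
    simp only [hWdef, hx]
    have h4 := hBne j n (hn j)
    have h5 := hh0 n
    generalize ∑ k ∈ Finset.range n, (aeval z (P k) * B j k) / h k = Sg
    field_simp
  · intro z hz
    have hzs := hKsub z hz
    have h1 := cau_ident hfinj hf0 (fun i j => hwf _ (hf1 i) j) ξ hξ' (φ z) (hwf _ (hφn z hzs))
    simp only [mul_one_div]
    rw [h1]
    refine Finset.prod_congr rfl fun j _ => ?_
    have h2 := hφ0 z hzs
    have h3 := hf0 j
    have h4 := hwf _ (hφn z hzs) j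
    have e : z - ((c j : ℝ) : ℂ) = (φ z - f j) * (φ z * f j - 1) / (2 * φ z * f j) := by
      have e1 : z = (φ z + (φ z)⁻¹) / 2 := phi_z hφsq hzs
      have e2 : ((c j : ℝ) : ℂ) = (f j + (f j)⁻¹) / 2 := phi_z hφsq (hcs j)
      calc z - ((c j : ℝ) : ℂ) = (φ z + (φ z)⁻¹) / 2 - (f j + (f j)⁻¹) / 2 := congrArg₂ (fun u v => u - v) e1 e2
        _ = _ := by field_simp; ring
    change f j * (φ z - f j) / (φ z * f j - 1) = (φ z - f j)^2 / (2 * φ z * (z - ((c j : ℝ) : ℂ)))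
    rw [e]
    by_cases h0 : φ z - f j = 0
    · rw [h0]; simp
    · field_simp



end
end

section
/- Integral representation of the remainder: for every k ≥ 1 and every n, for all z ∈ ℂ ∖ [−1,1] with S_{n+k}(z) ≠ 0, μ̂_k(z) − R_n^{[k]}(z) = ∫_{−1}^{1} S_{n+k}(x) Q_{k−1}(x) / (S_{n+k}(z) (z − x)) dμ_ρ(x); moreover, if additionally S_{n−d+1}(z) ≠ 0 and n ≥ d, then μ̂_k(z) − R_n^{[k]}(z) = ∫_{−1}^{1} S_{n+k}(x) S_{n−d+1}(x) Q_{k−1}(x) / (S_{n+k}(z) S_{n−d+1}(z) (z − x)) dμ_ρ(x). -/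
open MeasureTheory Polynomial Filter
open scoped Classical

noncomputable section

theorem auxInt (μ : Measure ℝ) [IsFiniteMeasure μ] {E : Type*} [NormedAddCommGroup E]
    (f : ℝ → E) (hf : ContinuousOn f (Set.Icc (-1:ℝ) 1)) :
    Integrable f (μ.restrict (Set.Icc (-1:ℝ) 1)) :=
  hf.integrableOn_compact isCompact_Icc

theorem sobAdd (μ : Measure ℝ) [IsFiniteMeasure μ] {N : ℕ} (c : Fin N → ℝ) (d : Fin N → ℕ)
    (η : Fin N → ℕ → ℝ) (f g h : Polynomial ℝ) :
    sobInner2 μ c d η (f + g) h = sobInner2 μ c d η f h + sobInner2 μ c d η g h := by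
  unfold sobInner2
  have h1 : (∫ x in Set.Icc (-1:ℝ) 1, (f + g).eval x * h.eval x ∂μ) =
      (∫ x in Set.Icc (-1:ℝ) 1, f.eval x * h.eval x ∂μ) +
      ∫ x in Set.Icc (-1:ℝ) 1, g.eval x * h.eval x ∂μ := by
    rw [← integral_add]
    · simp [add_mul]
    · exact auxInt μ _ (by fun_prop)
    · exact auxInt μ _ (by fun_prop)
  rw [h1]
  simp only [iterate_map_add, eval_add, mul_add, add_mul, Finset.sum_add_distrib]
  ring

theorem sobSmul (μ : Measure ℝ) {N : ℕ} (c : Fin N → ℝ) (d : Fin N → ℕ)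
    (η : Fin N → ℕ → ℝ) (a : ℝ) (f h : Polynomial ℝ) :
    sobInner2 μ c d η (a • f) h = a * sobInner2 μ c d η f h := by
  unfold sobInner2
  rw [mul_add, ← integral_const_mul, Finset.mul_sum]
  congr 1
  · simp [mul_assoc]
  · refine Finset.sum_congr rfl fun j _ => ?_
    rw [Finset.mul_sum]
    refine Finset.sum_congr rfl fun i _ => ?_
    rw [iterate_derivative_smul]
    simp only [eval_smul, smul_eq_mul]
    ring

theorem sobOrth (μ : Measure ℝ) [IsFiniteMeasure μ] {N : ℕ} (c : Fin N → ℝ) (d : Fin N → ℕ)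
    (η : Fin N → ℕ → ℝ) (h : Polynomial ℝ) (n : ℕ)
    (ho : ∀ m < n, sobInner2 μ c d η (X ^ m) h = 0) (f : Polynomial ℝ) (hf : f.degree < n) :
    sobInner2 μ c d η f h = 0 := by
  rw [← Polynomial.mem_degreeLT, Polynomial.degreeLT_eq_span_X_pow] at hf
  induction hf using Submodule.span_induction with
  | mem x hx =>
    simp only [Finset.coe_image, Set.mem_image, Finset.coe_range, Set.mem_Iio] at hx
    obtain ⟨m, hm, rfl⟩ := hx
    exact ho m hm
  | zero => simpa using sobSmul μ c d η 0 0 h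
  | add x y _ _ hx hy => rw [sobAdd, hx, hy, add_zero]
  | smul a x _ hx => rw [sobSmul, hx, mul_zero]

theorem rho_dvd {N : ℕ} (c : Fin N → ℝ) (d : Fin N → ℕ) (hc : ∀ j, c j ∉ Set.Icc (-1:ℝ) 1)
    (j : Fin N) : (X - C (c j)) ^ (d j + 1) ∣ rhoPoly c d := by
  unfold rhoPoly
  by_cases h : c j < -1
  · exact Dvd.dvd.mul_right (Finset.dvd_prod_of_mem (fun j => (X - C (c j)) ^ (d j + 1))
      (by simp [h])) _
  · have h1 : 1 < c j := by
      by_contra h2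
      exact hc j ⟨not_lt.1 h, not_lt.1 h2⟩
    refine Dvd.dvd.mul_left (dvd_trans ?_
      (Finset.dvd_prod_of_mem (fun j => (C (c j) - X) ^ (d j + 1)) (a := j) (by simp [h1]))) _
    exact pow_dvd_pow_of_dvd ⟨-1, by ring⟩ _

theorem rho_deg {N : ℕ} (c : Fin N → ℝ) (d : Fin N → ℕ) :
    (rhoPoly c d).natDegree ≤ N + ∑ j, d j := by
  unfold rhoPoly
  have e1 : ∀ j, ((X - C (c j)) ^ (d j + 1)).natDegree ≤ d j + 1 := fun j => by simp
  have e2 : ∀ j, ((C (c j) - X) ^ (d j + 1)).natDegree ≤ d j + 1 := fun j => by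
    refine natDegree_pow_le_of_le _ ?_ |>.trans (by simp : (d j + 1) * 1 ≤ _)
    rw [natDegree_sub]; simp
  refine natDegree_mul_le.trans ((add_le_add ((natDegree_prod_le _ _).trans
    (Finset.sum_le_sum fun j _ => e1 j)) ((natDegree_prod_le _ _).trans
    (Finset.sum_le_sum fun j _ => e2 j))).trans ?_)
  rw [← Finset.sum_union]
  · refine (Finset.sum_le_sum_of_subset (Finset.subset_univ _)).trans ?_
    rw [Finset.sum_add_distrib]; simp [add_comm]
  · rw [Finset.disjoint_filter]
    intro j _ h1 h2
    linarith

theorem intOrth (μ : Measure ℝ) [IsFiniteMeasure μ] {N : ℕ} (c : Fin N → ℝ) (d : Fin N → ℕ)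
    (hc : ∀ j, c j ∉ Set.Icc (-1:ℝ) 1)
    (η : Fin N → ℕ → ℝ) (h : Polynomial ℝ) (n : ℕ)
    (ho : ∀ m < n, sobInner2 μ c d η (X ^ m) h = 0) (q : Polynomial ℝ)
    (hq : q.natDegree + (N + ∑ j, d j) < n) :
    ∫ x in Set.Icc (-1:ℝ) 1, (q * rhoPoly c d).eval x * h.eval x ∂μ = 0 := by
  have h0 := sobOrth μ c d η h n ho (q * rhoPoly c d) (by
    refine lt_of_le_of_lt degree_le_natDegree ?_
    have := natDegree_mul_le (p := q) (q := rhoPoly c d)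
    have := rho_deg c d
    exact_mod_cast (by omega : (q * rhoPoly c d).natDegree < n))
  unfold sobInner2 at h0
  rwa [Finset.sum_eq_zero, add_zero] at h0
  intro j _
  refine Finset.sum_eq_zero fun i hi => ?_
  have hd : (X - C (c j)) ^ (d j + 1) ∣ q * rhoPoly c d := (rho_dvd c d hc j).mul_left q
  have h2 := pow_sub_dvd_iterate_derivative_of_pow_dvd i hd
  have hi' : d j + 1 - i ≠ 0 := by
    have := Finset.mem_range.1 hi
    omega
  have h3 := dvd_iff_isRoot.1 ((dvd_pow_self (X - C (c j)) hi').trans h2)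
  rw [IsRoot.def] at h3
  rw [h3]; ring

theorem diffQuot (p : Polynomial ℝ) (z : ℂ) (x : ℝ) (h : z - (x:ℂ) ≠ 0) :
    (aeval z p - ((p.eval x : ℝ) : ℂ)) / (z - (x : ℂ)) =
      ∑ i ∈ Finset.range (p.natDegree + 1), ∑ a ∈ Finset.range i,
        ((p.coeff i : ℂ) * z ^ a) * ((x ^ (i - 1 - a) : ℝ) : ℂ) := by
  rw [div_eq_iff h, aeval_eq_sum_range, eval_eq_sum_range]
  push_cast
  rw [← Finset.sum_sub_distrib, Finset.sum_mul]
  refine Finset.sum_congr rfl fun i _ => ?_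
  have := (Commute.all z (x:ℂ)).geom_sum₂_mul i
  rw [Complex.real_smul, ← mul_sub, ← this, ← mul_assoc, Finset.mul_sum]
  simp only [mul_assoc]

/-- Integral representation of the remainder `μ̂_k - R_n^{[k]}`. -/
theorem statement16
    (μ : Measure ℝ) [IsFiniteMeasure μ]
    (hμsupp : μ (Set.Icc (-1:ℝ) 1)ᶜ = 0)
    (hμinf : ∀ p : Polynomial ℝ, p ≠ 0 → 0 < ∫ x in Set.Icc (-1:ℝ) 1, (p.eval x) ^ 2 ∂μ)
    {N : ℕ} (c : Fin N → ℝ) (d : Fin N → ℕ)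
    (hc : ∀ j, c j ∉ Set.Icc (-1:ℝ) 1)
    (η : Fin N → ℕ → ℝ) (hη : ∀ j i, i ≤ d j → 0 ≤ η j i) (hηd : ∀ j, 0 < η j (d j))
    (S : ℕ → Polynomial ℝ)
    (hSmonic : ∀ n, (S n).Monic) (hSdeg : ∀ n, (S n).natDegree = n)
    (hSorth : ∀ n, ∀ m < n, sobInner2 μ c d η (X ^ m) (S n) = 0)
    (Q : ℕ → Polynomial ℝ)
    (hQmonic : ∀ n, (Q n).Monic) (hQdeg : ∀ n, (Q n).natDegree = n)
    (hQorth : ∀ n, ∀ m < n,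
      (∫ x in Set.Icc (-1:ℝ) 1, x ^ m * (Q n).eval x * (rhoPoly c d).eval x ∂μ) = 0)
    (k n : ℕ) (hk : 1 ≤ k) (z : ℂ) (hz : z ∉ segIcc)
    (hz1 : aeval z (S (n + k)) ≠ 0) :
    (markovHat μ (rhoPoly c d) (Q (k - 1)) z -
        assocFun μ (rhoPoly c d) (Q (k - 1)) (S (n + k)) z / aeval z (S (n + k)) =
      ∫ x in Set.Icc (-1:ℝ) 1,
        (((S (n + k)).eval x * (Q (k - 1)).eval x * (rhoPoly c d).eval x : ℝ) : ℂ) /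
          (aeval z (S (n + k)) * (z - (x : ℂ))) ∂μ) ∧
    (N + ∑ j, d j ≤ n → aeval z (S (n - (N + ∑ j, d j) + 1)) ≠ 0 →
      markovHat μ (rhoPoly c d) (Q (k - 1)) z -
          assocFun μ (rhoPoly c d) (Q (k - 1)) (S (n + k)) z / aeval z (S (n + k)) =
        ∫ x in Set.Icc (-1:ℝ) 1,
          (((S (n + k)).eval x * (S (n - (N + ∑ j, d j) + 1)).eval x *
              (Q (k - 1)).eval x * (rhoPoly c d).eval x : ℝ) : ℂ) /
            (aeval z (S (n + k)) * aeval z (S (n - (N + ∑ j, d j) + 1)) *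
              (z - (x : ℂ))) ∂μ) := by
  have hne : ∀ x ∈ Set.Icc (-1:ℝ) 1, z - (x:ℂ) ≠ 0 := by
    intro x hx h0
    exact hz ⟨x, hx, (sub_eq_zero.1 h0).symm⟩
  have cont : ∀ (p : Polynomial ℝ), Continuous fun x : ℝ => ((p.eval x : ℝ) : ℂ) := fun p =>
    Complex.continuous_ofReal.comp p.continuous
  have contd : ∀ (p : Polynomial ℝ) (a : ℂ), ContinuousOn
      (fun x : ℝ => a * (((p.eval x : ℝ) : ℂ) / (z - (x : ℂ)))) (Set.Icc (-1:ℝ) 1) := fun p a =>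
    continuousOn_const.mul ((cont p).continuousOn.div (by fun_prop) hne)
  set T := S (n + k) with hT
  set q := Q (k - 1) with hq
  set ρ := rhoPoly c d with hρ
  have part1 : markovHat μ ρ q z - assocFun μ ρ q T z / aeval z T =
      ∫ x in Set.Icc (-1:ℝ) 1,
        ((T.eval x * q.eval x * ρ.eval x : ℝ) : ℂ) / (aeval z T * (z - (x : ℂ))) ∂μ := by
    unfold markovHat assocFun
    rw [← integral_div, ← integral_sub]
    · refine setIntegral_congr_fun measurableSet_Icc fun x hx => ?_
      have := hne x hx
      push_cast
      field_simp
      ring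
    · refine auxInt μ _ ((contd (q * ρ) 1).congr fun x hx => ?_)
      simp
    · refine auxInt μ _ (((contd (q * ρ) 1).sub (contd (T * q * ρ) (aeval z T)⁻¹)).congr
        fun x hx => ?_)
      have := hne x hx
      simp only [eval_mul, Pi.sub_apply]
      push_cast
      field_simp
  refine ⟨part1, fun hn hz2 => ?_⟩
  rw [part1]
  set p := S (n - (N + ∑ j, d j) + 1) with hp
  have key : ∫ x in Set.Icc (-1:ℝ) 1, ((T.eval x * q.eval x * ρ.eval x : ℝ) : ℂ) *
      ((aeval z p - ((p.eval x : ℝ) : ℂ)) / (z - (x : ℂ))) ∂μ = 0 := by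
    have e : ∫ x in Set.Icc (-1:ℝ) 1, ((T.eval x * q.eval x * ρ.eval x : ℝ) : ℂ) *
        ((aeval z p - ((p.eval x : ℝ) : ℂ)) / (z - (x : ℂ))) ∂μ =
        ∫ x in Set.Icc (-1:ℝ) 1, ∑ i ∈ Finset.range (p.natDegree + 1), ∑ a ∈ Finset.range i,
          ((p.coeff i : ℂ) * z ^ a) *
            ((((X ^ (i - 1 - a) * q) * ρ).eval x * T.eval x : ℝ) : ℂ) ∂μ := by
      refine setIntegral_congr_fun measurableSet_Icc fun x hx => ?_
      beta_reduce
      rw [diffQuot p z x (hne x hx), Finset.mul_sum]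
      refine Finset.sum_congr rfl fun i _ => ?_
      rw [Finset.mul_sum]
      refine Finset.sum_congr rfl fun a _ => ?_
      simp only [eval_mul, eval_pow, eval_X]
      push_cast
      ring
    have ci : ∀ i a : ℕ, Integrable (fun x : ℝ => ((p.coeff i : ℂ) * z ^ a) *
            ((((X ^ (i - 1 - a) * q) * ρ).eval x * T.eval x : ℝ) : ℂ))
            (μ.restrict (Set.Icc (-1:ℝ) 1)) := fun i a =>
      auxInt μ _ (Continuous.continuousOn (by
        refine continuous_const.mul (Complex.continuous_ofReal.comp ?_)
        exact (Polynomial.continuous _).mul T.continuous))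
    rw [e, integral_finsetSum _ fun i _ => integrable_finsetSum _ fun a _ => ci i a]
    refine Finset.sum_eq_zero fun i hi => ?_
    rw [integral_finsetSum _ fun a _ => ci i a]
    refine Finset.sum_eq_zero fun a ha => ?_
    rw [integral_const_mul, integral_complex_ofReal,
      intOrth μ c d hc η T (n + k) (hSorth (n + k)), Complex.ofReal_zero, mul_zero]
    have h1 := natDegree_mul_le (p := (X ^ (i - 1 - a) : ℝ[X])) (q := q)
    have hqd : q.natDegree = k - 1 := hQdeg _
    rw [natDegree_X_pow, hqd] at h1
    rw [hp, hSdeg] at hi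
    simp only [Finset.mem_range] at hi ha
    omega
  rw [← sub_eq_zero, ← integral_sub]
  · rw [← mul_zero ((aeval z T)⁻¹ * (aeval z p)⁻¹), ← key, ← integral_const_mul]
    refine setIntegral_congr_fun measurableSet_Icc fun x hx => ?_
    have := hne x hx
    push_cast
    field_simp
  · refine auxInt μ _ ((contd (T * q * ρ) (aeval z T)⁻¹).congr fun x hx => ?_)
    have := hne x hx
    simp only [eval_mul]
    push_cast
    field_simp
  · refine auxInt μ _ ((contd (T * p * q * ρ) ((aeval z T)⁻¹ * (aeval z p)⁻¹)).congr
      fun x hx => ?_)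
    have := hne x hx
    simp only [eval_mul]
    push_cast
    field_simp

end
end
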